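/- arXiv:1505.04751 — 5 statements merged into one kernel-verified Lean document; each statement's English description precedes it below -/
import Mathlib

section
/- Let ψ ∈ [0,∞)^V satisfy Σ_{w∈V} B_{vw} ψ_w ≤ ψ_v for all v ∈ V. Then there exist unique vectors h, k ∈ [0,∞)^V such that h is B-harmonic and ψ_v = h_v + Σ_{n=0}^∞ Σ_{w∈V} (Bⁿ)_{vw} k_w for all v ∈ V (in particular this series converges). Moreover k is given by k_v = ψ_v − Σ_{w∈V} B_{vw} ψ_w, and h is given by h_v = lim_{n→∞} Σ_{w∈V} (Bⁿ)_{vw} ψ_w. -/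
open Filter Finset

/-- The spectral radius of a real matrix, `ρ(M) = lim_n ‖Mⁿ‖^{1/n}`
(computed with the entrywise ℓ¹-norm, and as a `limsup` so that it is always defined;
it is `0` for the matrix over the empty index type). -/
noncomputable def specRad {n : Type*} [Fintype n] [DecidableEq n] (M : Matrix n n ℝ) : ℝ :=
  Filter.limsup (fun k : ℕ => (∑ i, ∑ j, |(M ^ k) i j|) ^ ((1 : ℝ) / (k : ℝ))) Filter.atTop

/-- The spectral radius `ρ(B^S)` of the submatrix of `B` obtained by restricting to `S × S`. -/
noncomputable def specRadOn {V : Type*} [Fintype V] (B : Matrix V V ℝ) (S : Set V) : ℝ :=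
  letI : Fintype S := (Set.toFinite S).fintype
  letI : DecidableEq S := Classical.decEq _
  specRad (fun i j : S => B i.1 j.1)

variable {V : Type*} [Fintype V]

/-- A vertex `s` is a sink for `B` when the row of `B` at `s` vanishes. -/
def IsSink (B : Matrix V V ℝ) (s : V) : Prop := ∀ w, B s w = 0

/-- `ψ` is `B`-harmonic: `Σ_w B v w * ψ w = ψ v` for all `v`. -/
def IsHarmonic (B : Matrix V V ℝ) (ψ : V → ℝ) : Prop :=
  ∀ v, ∑ w, B v w * ψ w = ψ v

/-- `ψ` is almost `B`-harmonic: `Σ_w B v w * ψ w = ψ v` for all `v` that are not sinks. -/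
def IsAlmostHarmonic (B : Matrix V V ℝ) (ψ : V → ℝ) : Prop :=
  ∀ v, ¬ IsSink B v → ∑ w, B v w * ψ w = ψ v

/-- A sink `s` is `B`-summable when `Σ_n (Bⁿ)_{v s} < ∞` for all `v`. -/
def IsSummableSink [DecidableEq V] (B : Matrix V V ℝ) (s : V) : Prop :=
  IsSink B s ∧ ∀ v, Summable (fun n : ℕ => (B ^ n) v s)

/-- The vector `φ^s` associated to a `B`-summable sink `s`. -/
noncomputable def phiSink [DecidableEq V] (B : Matrix V V ℝ) (s : V) : V → ℝ :=
  fun v => (∑' n : ℕ, (B ^ n) v s) / (∑ w, ∑' n : ℕ, (B ^ n) w s)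

/-- `v ⤳ w`: `(Bⁿ)_{vw} > 0` for some `n ≥ 0`. -/
def Reaches [DecidableEq V] (B : Matrix V V ℝ) (v w : V) : Prop :=
  ∃ n : ℕ, 0 < (B ^ n) v w

/-- The closure of a set of vertices: all vertices that reach it. -/
def closureSet [DecidableEq V] (B : Matrix V V ℝ) (F : Set V) : Set V :=
  {v | ∃ w ∈ F, Reaches B v w}

/-- A component: an equivalence class of `∼` on which `B` is nonzero. -/
def IsComponent [DecidableEq V] (B : Matrix V V ℝ) (C : Set V) : Prop :=
  (∃ v, C = {w | Reaches B v w ∧ Reaches B w v}) ∧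
  ∃ v ∈ C, ∃ w ∈ C, B v w ≠ 0

/-- A `B`-harmonic component. -/
def IsHarmonicComponent [DecidableEq V] (B : Matrix V V ℝ) (C : Set V) : Prop :=
  IsComponent B C ∧ specRadOn B C = 1 ∧
  ((closureSet B C \ C).Nonempty → specRadOn B (closureSet B C \ C) < 1)

/-- The property characterizing the vector `φ^C` of a `B`-harmonic component `C`. -/
def IsPhiC [DecidableEq V] (B : Matrix V V ℝ) (C : Set V) (φ : V → ℝ) : Prop :=
  (∀ v, 0 ≤ φ v) ∧ (∑ v, φ v = 1) ∧ IsHarmonic B φ ∧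
  (∀ v ∈ C, ∑ w, Set.indicator C (fun w => B v w * φ w) w = φ v) ∧
  (∀ v, φ v ≠ 0 ↔ v ∈ closureSet B C)

open scoped Classical in
/-- The vector `φ^C` of a `B`-harmonic component `C` (defined by choice; for a `B`-harmonic
component it is unique). -/
noncomputable def phiComp [DecidableEq V] (B : Matrix V V ℝ) (C : Set V) : V → ℝ :=
  if h : ∃ φ : V → ℝ, IsPhiC B C φ then h.choose else 0

/-!
For any `T`, the partial sums of `∑ₙ Tⁿ (ψ - T ψ)` telescope to `ψ - Tᴺ ψ`. When `T` is positive and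
`ψ` is nonnegative with `T ψ ≤ ψ`, these partial sums increase and are bounded by `ψ`, so the series
converges, and its remainder `h = lim Tᴺ ψ` is a nonnegative fixed point. Conversely a convergent
potential `G = ∑ₙ Tⁿ k` satisfies `T G = G - k`, so applying `T` to `ψ = h + G` recovers
`k = ψ - T ψ`, and telescoping again recovers `h = lim Tᴺ ψ`. This is an argument about continuous
positive operators on an ordered space with monotone convergence; besides finite matrices it covers,
for instance, row-finite nonnegative matrices over an infinite index set.
-/

theorem hasSum_sub_iff {ι E : Type*} [AddCommGroup E] [TopologicalSpace E] [T2Space E]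
    {f : ι → E} {a b : E} : HasSum f (a - b) ↔ Summable f ∧ a = b + ∑' i, f i := by
  refine ⟨fun hf ↦ ⟨hf.summable, by rw [hf.tsum_eq, add_sub_cancel]⟩, fun ⟨hf, hab⟩ ↦ ?_⟩
  rw [hab, add_sub_cancel_left]
  exact hf.hasSum

theorem summable_of_nonneg_of_sum_range_le {E : Type*} [AddCommMonoid E]
    [ConditionallyCompletePartialOrderSup E] [IsOrderedAddMonoid E] [TopologicalSpace E]
    [SupConvergenceClass E] {f : ℕ → E} {c : E} (hf : ∀ n, 0 ≤ f n)
    (hc : ∀ n, ∑ i ∈ range n, f i ≤ c) : Summable f := by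
  have h_mono : Monotone fun s : Finset ℕ ↦ ∑ i ∈ s, f i := Finset.sum_mono_set_of_nonneg hf
  have h_bdd : BddAbove (Set.range fun s : Finset ℕ ↦ ∑ i ∈ s, f i) := by
    refine ⟨c, Set.forall_mem_range.mpr fun s ↦ ?_⟩
    obtain ⟨n, hn⟩ := s.exists_nat_subset_range
    exact (h_mono hn).trans (hc n)
  exact ⟨_, tendsto_atTop_ciSup h_mono h_bdd⟩

section PotentialOperator

theorem pow_apply_nonneg {R E : Type*} [Semiring R] [AddCommMonoid E] [Module R E]
    [TopologicalSpace E] [Preorder E] {T : E →L[R] E} (hT : Monotone T) {x : E} (hx : 0 ≤ x)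
    (n : ℕ) : 0 ≤ (T ^ n) x := by
  simpa only [FunLike.coe_pow_eq_iterate, iterate_map_zero] using hT.iterate n hx

variable {R E : Type*} [Semiring R] [AddCommGroup E] [Module R E] [TopologicalSpace E]

theorem sum_range_pow_apply_sub (T : E →L[R] E) (ψ : E) (n : ℕ) :
    ∑ i ∈ range n, (T ^ i) (ψ - T ψ) = ψ - (T ^ n) ψ := by
  simpa only [map_sub, pow_succ, mul_apply_eq_comp, pow_zero, one_apply_eq_self] using
    Finset.sum_range_sub' (fun i ↦ (T ^ i) ψ) n

theorem sum_range_pow_apply_sub_le [Preorder E] [IsOrderedAddMonoid E] {T : E →L[R] E}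
    (hT : Monotone T) {ψ : E} (hψ : 0 ≤ ψ) (n : ℕ) :
    ∑ i ∈ range n, (T ^ i) (ψ - T ψ) ≤ ψ := by
  rw [sum_range_pow_apply_sub]
  exact sub_le_self ψ (pow_apply_nonneg hT hψ n)

/-- `ψ = h + ∑ₙ Tⁿ k` with `h` a fixed point of `T`: the decomposition of `ψ` into a harmonic part
`h` and the potential of the source `k`. Neither part is required to be nonnegative. The
sum is stated as a `HasSum` with value `ψ - h`, so that its convergence is part of the notion. -/
structure IsRieszDecomposition (T : E →L[R] E) (ψ h k : E) : Prop where
  map_harmonic : T h = h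
  hasSum_potential : HasSum (fun n ↦ (T ^ n) k) (ψ - h)

variable [IsTopologicalAddGroup E] [T2Space E]

theorem map_eq_sub_of_hasSum_pow_apply {T : E →L[R] E} {k G : E}
    (hG : HasSum (fun n ↦ (T ^ n) k) G) : T G = G - k := by
  have h_shift : HasSum (fun n ↦ (T ^ (n + 1)) k) (G - k) := by
    simpa using (hasSum_nat_add_iff' 1).mpr hG
  have h_map : HasSum (fun n ↦ (T ^ (n + 1)) k) (T G) := by
    simpa only [pow_succ', mul_apply_eq_comp] using T.hasSum hG
  exact h_map.unique h_shift

namespace IsRieszDecomposition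

variable {T : E →L[R] E} {ψ h k h' k' : E}

theorem source_eq (hd : IsRieszDecomposition T ψ h k) : k = ψ - T ψ := by
  have h_map : T ψ - h = ψ - h - k := by
    simpa only [map_sub, hd.map_harmonic] using map_eq_sub_of_hasSum_pow_apply hd.hasSum_potential
  rw [← sub_sub_sub_cancel_right ψ (T ψ) h, h_map, sub_sub_cancel]

theorem tendsto_pow_apply (hd : IsRieszDecomposition T ψ h k) :
    Tendsto (fun n ↦ (T ^ n) ψ) atTop (nhds h) := by
  have h_lim := hd.hasSum_potential.tendsto_sum_nat.const_sub ψ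
  simpa only [hd.source_eq, sum_range_pow_apply_sub, sub_sub_cancel] using h_lim

theorem unique (hd : IsRieszDecomposition T ψ h k) (hd' : IsRieszDecomposition T ψ h' k') :
    h = h' ∧ k = k' :=
  ⟨tendsto_nhds_unique hd.tendsto_pow_apply hd'.tendsto_pow_apply,
    hd.source_eq.trans hd'.source_eq.symm⟩

end IsRieszDecomposition

theorem isRieszDecomposition_of_hasSum {T : E →L[R] E} {ψ G : E}
    (hG : HasSum (fun n ↦ (T ^ n) (ψ - T ψ)) G) :
    IsRieszDecomposition T ψ (ψ - G) (ψ - T ψ) where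
  map_harmonic := by rw [map_sub, map_eq_sub_of_hasSum_pow_apply hG]; abel
  hasSum_potential := by rwa [sub_sub_cancel]

end PotentialOperator

section PositiveOperator

variable {R E : Type*} [Semiring R] [AddCommGroup E] [Module R E]
  [ConditionallyCompletePartialOrderSup E] [IsOrderedAddMonoid E] [TopologicalSpace E]
  [IsTopologicalAddGroup E] [OrderClosedTopology E] [SupConvergenceClass E]

theorem exists_nonneg_isRieszDecomposition {T : E →L[R] E} (hT : Monotone T) {ψ : E}
    (hψ : 0 ≤ ψ) (hTψ : T ψ ≤ ψ) :
    ∃ h k, 0 ≤ h ∧ 0 ≤ k ∧ IsRieszDecomposition T ψ h k := by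
  have hk : 0 ≤ ψ - T ψ := sub_nonneg.mpr hTψ
  have h_le := sum_range_pow_apply_sub_le hT hψ
  have hs : Summable fun n ↦ (T ^ n) (ψ - T ψ) :=
    summable_of_nonneg_of_sum_range_le (pow_apply_nonneg hT hk) h_le
  exact ⟨_, _, sub_nonneg.mpr (hs.tsum_le_of_sum_range_le h_le), hk,
    isRieszDecomposition_of_hasSum hs.hasSum⟩

theorem riesz_decomposition_general {T : E →L[R] E} (hT : Monotone T) {ψ : E}
    (hψ : 0 ≤ ψ) (hTψ : T ψ ≤ ψ) :
    (∃! p : E × E, 0 ≤ p.1 ∧ 0 ≤ p.2 ∧ IsRieszDecomposition T ψ p.1 p.2) ∧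
    ∀ h k, IsRieszDecomposition T ψ h k →
      k = ψ - T ψ ∧ Tendsto (fun n ↦ (T ^ n) ψ) atTop (nhds h) := by
  obtain ⟨h, k, hh, hk, hd⟩ := exists_nonneg_isRieszDecomposition hT hψ hTψ
  refine ⟨⟨(h, k), ⟨hh, hk, hd⟩, fun p hp ↦ ?_⟩, fun _ _ hd' ↦
    ⟨hd'.source_eq, hd'.tendsto_pow_apply⟩⟩
  exact Prod.ext_iff.mpr (hp.2.2.unique hd)

end PositiveOperator

section Matrix

variable [DecidableEq V] (𝕜 : Type*) [NontriviallyNormedField 𝕜] [CompleteSpace 𝕜]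

/-- The continuous linear operator `f ↦ B f` on column vectors defined by a square matrix `B`. It is
packaged as an algebra equivalence so that powers of `B` correspond to powers of the operator. -/
noncomputable def mulVecCLM : Matrix V V 𝕜 ≃ₐ[𝕜] ((V → 𝕜) →L[𝕜] (V → 𝕜)) :=
  Matrix.toLinAlgEquiv'.trans (Module.End.toContinuousLinearMap (V → 𝕜))

variable {𝕜}

theorem mulVecCLM_apply (B : Matrix V V 𝕜) (f : V → 𝕜) (v : V) :
    mulVecCLM 𝕜 B f v = ∑ w, B v w * f w :=
  rfl

theorem mulVecCLM_pow_apply (B : Matrix V V 𝕜) (n : ℕ) (f : V → 𝕜) (v : V) :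
    (mulVecCLM 𝕜 B ^ n) f v = ∑ w, (B ^ n) v w * f w := by
  rw [← map_pow, mulVecCLM_apply]

theorem monotone_mulVecCLM {B : Matrix V V ℝ} (hB : ∀ v w, 0 ≤ B v w) :
    Monotone (mulVecCLM ℝ B) := fun _ _ hfg v ↦
  Finset.sum_le_sum fun w _ ↦ mul_le_mul_of_nonneg_left (hfg w) (hB v w)

theorem isRieszDecomposition_mulVecCLM_iff {B : Matrix V V ℝ} {ψ h k : V → ℝ} :
    IsRieszDecomposition (mulVecCLM ℝ B) ψ h k ↔
      IsHarmonic B h ∧ (∀ v, Summable fun n : ℕ ↦ ∑ w, (B ^ n) v w * k w) ∧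
        ∀ v, ψ v = h v + ∑' n : ℕ, ∑ w, (B ^ n) v w * k w := by
  have h_harmonic : mulVecCLM ℝ B h = h ↔ IsHarmonic B h := funext_iff
  have h_hasSum : HasSum (fun n ↦ (mulVecCLM ℝ B ^ n) k) (ψ - h) ↔
      ∀ v, HasSum (fun n ↦ ∑ w, (B ^ n) v w * k w) (ψ v - h v) := by
    simp only [Pi.hasSum, mulVecCLM_pow_apply, Pi.sub_apply]
  rw [← h_harmonic, ← forall_and]
  simp only [← hasSum_sub_iff, ← h_hasSum]
  exact ⟨fun ⟨hh, hs⟩ ↦ ⟨hh, hs⟩, fun ⟨hh, hs⟩ ↦ ⟨hh, hs⟩⟩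

end Matrix

/-- Riesz decomposition: if `ψ ≥ 0` and `Bψ ≤ ψ` entrywise, there are unique nonnegative
vectors `h, k` with `h` `B`-harmonic and `ψ_v = h_v + Σ_{n} Σ_w (Bⁿ)_{vw} k_w` (the series
converging); moreover `k_v = ψ_v - Σ_w B_{vw} ψ_w` and `h_v = lim_n Σ_w (Bⁿ)_{vw} ψ_w`. -/
theorem riesz_decomposition {V : Type*} [Fintype V] [Nonempty V] [DecidableEq V]
    (B : Matrix V V ℝ) (hB : ∀ v w, 0 ≤ B v w)
    (ψ : V → ℝ) (hψ : ∀ v, 0 ≤ ψ v)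
    (hsub : ∀ v, ∑ w, B v w * ψ w ≤ ψ v) :
    (∃! p : (V → ℝ) × (V → ℝ),
      (∀ v, 0 ≤ p.1 v) ∧ (∀ v, 0 ≤ p.2 v) ∧ IsHarmonic B p.1 ∧
      (∀ v, Summable (fun n : ℕ => ∑ w, (B ^ n) v w * p.2 w)) ∧
      (∀ v, ψ v = p.1 v + ∑' n : ℕ, ∑ w, (B ^ n) v w * p.2 w)) ∧
    (∀ h k : V → ℝ,
      ((∀ v, 0 ≤ h v) ∧ (∀ v, 0 ≤ k v) ∧ IsHarmonic B h ∧
        (∀ v, Summable (fun n : ℕ => ∑ w, (B ^ n) v w * k w)) ∧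
        (∀ v, ψ v = h v + ∑' n : ℕ, ∑ w, (B ^ n) v w * k w)) →
      (∀ v, k v = ψ v - ∑ w, B v w * ψ w) ∧
      (∀ v, Filter.Tendsto (fun n : ℕ => ∑ w, (B ^ n) v w * ψ w)
        Filter.atTop (nhds (h v)))) := by
  have h_riesz := riesz_decomposition_general (monotone_mulVecCLM hB) hψ hsub
  simp only [isRieszDecomposition_mulVecCLM_iff, Pi.le_def, Pi.zero_apply, funext_iff,
    tendsto_pi_nhds, Pi.sub_apply, mulVecCLM_pow_apply, mulVecCLM_apply] at h_riesz
  exact ⟨h_riesz.1, fun h k ⟨_, _, hd⟩ ↦ h_riesz.2 h k hd⟩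
end

section
/- Let s ∈ V be a B-summable sink. Then φ^s is a normalized B-almost harmonic vector. -/
open Filter Finset

variable {V : Type*} [Fintype V]

/-!
The vector `φ^s` is, up to normalization, the column at `s` of the Green's function
`G = ∑ₙ Bⁿ`. Splitting off the term `n = 0` gives `G = 1 + B * G`, so the column at `s` is
fixed by `B` at every vertex other than `s`, in particular at every vertex that is not a sink.
Since the term `n = 0` of `G s s` is `1`, the entries of the column, which are nonnegative, have
sum at least `1`, so the column can be normalized.
-/

section GreenFunction

variable {ι R : Type*} [Fintype ι] [DecidableEq ι] [Semiring R] [TopologicalSpace R]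

/-- The Green's function (or fundamental matrix) `∑ₙ Aⁿ` of a square matrix, with the series taken
entrywise. An entry whose series diverges has the junk value `0`. -/
noncomputable def greenFunction (A : Matrix ι ι R) : Matrix ι ι R :=
  Matrix.of fun i j => ∑' n : ℕ, (A ^ n) i j

theorem greenFunction_apply (A : Matrix ι ι R) (i j : ι) :
    greenFunction A i j = ∑' n : ℕ, (A ^ n) i j :=
  rfl

theorem greenFunction_apply_eq_one_add_mul [IsTopologicalSemiring R] [T2Space R]
    {A : Matrix ι ι R} {j : ι} (hsum : ∀ i, Summable fun n : ℕ => (A ^ n) i j) (i : ι) :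
    greenFunction A i j = (1 + A * greenFunction A) i j := by
  have hasSum_succ : HasSum (fun n : ℕ => (A ^ (n + 1)) i j) ((A * greenFunction A) i j) := by
    simp only [pow_succ', Matrix.mul_apply]
    exact hasSum_sum fun k _ => (hsum k).hasSum.mul_left (A i k)
  have hasSum_all : HasSum (fun n : ℕ => (A ^ n) i j)
      ((A ^ 0) i j + (A * greenFunction A) i j) :=
    HasSum.zero_add (f := fun n : ℕ => (A ^ n) i j) hasSum_succ
  rw [greenFunction_apply, hasSum_all.tsum_eq, pow_zero, Matrix.add_apply]

variable [PartialOrder R] [IsOrderedRing R] [OrderClosedTopology R] {A : Matrix ι ι R}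

theorem greenFunction_apply_nonneg (hA : ∀ i j, 0 ≤ A i j) (i j : ι) :
    0 ≤ greenFunction A i j :=
  tsum_nonneg fun n => Matrix.pow_apply_nonneg hA n i j

theorem one_le_greenFunction_apply_self (hA : ∀ i j, 0 ≤ A i j) {i : ι}
    (hsum : Summable fun n : ℕ => (A ^ n) i i) :
    1 ≤ greenFunction A i i := by
  simpa only [greenFunction_apply, pow_zero, Matrix.one_apply_eq] using
    hsum.le_tsum 0 fun n _ => Matrix.pow_apply_nonneg hA n i i

theorem one_le_sum_greenFunction_apply (hA : ∀ i j, 0 ≤ A i j) {j : ι}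
    (hsum : Summable fun n : ℕ => (A ^ n) j j) :
    1 ≤ ∑ i, greenFunction A i j :=
  (one_le_greenFunction_apply_self hA hsum).trans <|
    single_le_sum (f := fun i => greenFunction A i j)
      (fun i _ => greenFunction_apply_nonneg hA i j) (mem_univ j)

end GreenFunction

section PhiSink

variable [DecidableEq V] {B : Matrix V V ℝ} {s : V}

theorem phiSink_apply (B : Matrix V V ℝ) (s v : V) :
    phiSink B s v = greenFunction B v s / ∑ w, greenFunction B w s :=
  rfl

theorem phiSink_nonneg (hB : ∀ v w, 0 ≤ B v w) (v : V) : 0 ≤ phiSink B s v :=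
  div_nonneg (greenFunction_apply_nonneg hB v s)
    (sum_nonneg fun w _ => greenFunction_apply_nonneg hB w s)

theorem sum_phiSink (hB : ∀ v w, 0 ≤ B v w) (hs : Summable fun n : ℕ => (B ^ n) s s) :
    ∑ v, phiSink B s v = 1 := by
  have total_pos : 0 < ∑ w, greenFunction B w s :=
    zero_lt_one.trans_le (one_le_sum_greenFunction_apply hB hs)
  simp only [phiSink_apply]
  rw [← sum_div, div_self total_pos.ne']

theorem sum_mul_phiSink_of_ne (hs : ∀ v, Summable fun n : ℕ => (B ^ n) v s) {v : V}
    (hv : v ≠ s) : ∑ w, B v w * phiSink B s w = phiSink B s v := by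
  have green_eq : greenFunction B v s = ∑ w, B v w * greenFunction B w s := by
    rw [greenFunction_apply_eq_one_add_mul hs, Matrix.add_apply, Matrix.one_apply_ne hv, zero_add,
      Matrix.mul_apply]
  simp only [phiSink_apply, green_eq, sum_div, mul_div_assoc]

end PhiSink

/-- For a `B`-summable sink `s`, the vector `φ^s` is a normalized almost `B`-harmonic vector. -/
theorem phiSink_isAlmostHarmonic {V : Type*} [Fintype V] [Nonempty V] [DecidableEq V]
    (B : Matrix V V ℝ) (hB : ∀ v w, 0 ≤ B v w)
    (s : V) (hs : IsSummableSink B s) :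
    (∀ v, 0 ≤ phiSink B s v) ∧ (∑ v, phiSink B s v = 1) ∧
      IsAlmostHarmonic B (phiSink B s) := by
  obtain ⟨hsink, hsum⟩ := hs
  refine ⟨phiSink_nonneg hB, sum_phiSink hB (hsum s), fun v hv => ?_⟩
  have hvs : v ≠ s := fun h => hv (h ▸ hsink)
  exact sum_mul_phiSink_of_ne hsum hvs
end

section
/- Let s ∈ V be a B-summable sink. Then φ^s is an extreme point of the convex set of normalized B-almost harmonic vectors: if ψ₁, ψ₂ are normalized B-almost harmonic vectors, t ∈ (0,1), and φ^s = t ψ₁ + (1−t) ψ₂, then ψ₁ = ψ₂ = φ^s. -/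
open Filter Finset

variable {V : Type*} [Fintype V]

/-!
Write `G v = ∑ₙ (Bⁿ)_{vs}`, so that `φ^s` is a multiple of `G` and `G = δ_s + B G`. If `ψ` is
nonnegative, almost harmonic and dominated by a multiple of `G`, then `ψ` vanishes at every sink
other than `s`, hence `ψ = ψ(s) δ_s + B ψ`. The difference `d = ψ - ψ(s) G` therefore satisfies
`d = B d = Bⁿ d`, while `|d| ≤ C G` for some constant `C`. Hence `|d| ≤ C Bⁿ G`, and `Bⁿ G` is the
tail of the convergent series `G`, so `d = 0`. In a convex combination equal to `φ^s` each summand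
is dominated by a multiple of `φ^s`, so each is a normalized multiple of `G`.
-/

open scoped Matrix Topology

theorem pow_mulVec_eq_self [DecidableEq V] {R : Type*} [Semiring R] {A : Matrix V V R}
    {x : V → R} (hx : A *ᵥ x = x) (n : ℕ) : A ^ n *ᵥ x = x := by
  induction n with
  | zero => rw [pow_zero, Matrix.one_mulVec]
  | succ n ih => rw [pow_succ, ← Matrix.mulVec_mulVec, hx, ih]

section NonnegativeMatrix

variable {R : Type*} [Ring R] [LinearOrder R] [IsOrderedRing R]

theorem abs_mulVec_apply_le {W : Type*} {A : Matrix W V R} (hA : ∀ i j, 0 ≤ A i j) {x y : V → R}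
    (hxy : ∀ j, |x j| ≤ y j) (i : W) : |(A *ᵥ x) i| ≤ (A *ᵥ y) i :=
  calc |∑ j, A i j * x j|
    _ ≤ ∑ j, |A i j * x j| := abs_sum_le_sum_abs _ _
    _ = ∑ j, A i j * |x j| := by simp only [abs_mul, abs_of_nonneg (hA i _)]
    _ ≤ ∑ j, A i j * y j :=
      sum_le_sum fun j _ => mul_le_mul_of_nonneg_left (hxy j) (hA i j)

theorem eq_zero_of_mulVec_eq_self_of_abs_le [DecidableEq V] [TopologicalSpace R]
    [OrderClosedTopology R] {B : Matrix V V R} (hB : ∀ v w, 0 ≤ B v w) {x y : V → R}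
    (hx : B *ᵥ x = x) (hxy : ∀ v, |x v| ≤ y v)
    (hy : ∀ v, Tendsto (fun n => (B ^ n *ᵥ y) v) atTop (𝓝 0)) : x = 0 := by
  funext v
  have hle (n : ℕ) : |x v| ≤ (B ^ n *ᵥ y) v := by
    have h := abs_mulVec_apply_le (Matrix.pow_apply_nonneg hB n) hxy v
    rwa [pow_mulVec_eq_self hx n] at h
  exact abs_nonpos_iff.mp (ge_of_tendsto' (hy v) hle)

end NonnegativeMatrix

/-- The column at `s` of the Green matrix `∑ₙ Bⁿ`, that is, the unnormalized `φ^s`. An entry whose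
series diverges is `0` by the convention for `∑'`. -/
noncomputable def greenVector {R : Type*} [Semiring R] [TopologicalSpace R] [DecidableEq V]
    (B : Matrix V V R) (s : V) : V → R :=
  fun v => ∑' n : ℕ, (B ^ n) v s

section GreenVector

variable [DecidableEq V] {R : Type*} [TopologicalSpace R]

section Semiring

variable [Semiring R] {B : Matrix V V R} {s : V}

theorem greenVector_nonneg [PartialOrder R] [IsOrderedRing R] [OrderClosedTopology R]
    (hB : ∀ v w, 0 ≤ B v w) (s v : V) : 0 ≤ greenVector B s v :=
  tsum_nonneg fun n => Matrix.pow_apply_nonneg hB n v s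

theorem greenVector_apply_of_row_eq_zero {v : V} (hv : ∀ w, B v w = 0) :
    greenVector B s v = (1 : Matrix V V R) v s := by
  have hpow (n : ℕ) (hn : n ≠ 0) : (B ^ n) v s = 0 := by
    obtain ⟨m, rfl⟩ := Nat.exists_eq_succ_of_ne_zero hn
    simp only [pow_succ', Matrix.mul_apply, hv, zero_mul, sum_const_zero]
  rw [greenVector, tsum_eq_single 0 hpow, pow_zero]

theorem pow_mulVec_greenVector [IsTopologicalSemiring R] [T2Space R]
    (hs : ∀ v, Summable fun n : ℕ => (B ^ n) v s) (n : ℕ) (v : V) :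
    (B ^ n *ᵥ greenVector B s) v = ∑' m : ℕ, (B ^ (m + n)) v s :=
  calc ∑ w, (B ^ n) v w * ∑' m : ℕ, (B ^ m) w s
    _ = ∑' m : ℕ, ∑ w, (B ^ n) v w * (B ^ m) w s := by
      rw [Summable.tsum_finsetSum fun w _ => (hs w).mul_left _]
      simp only [(hs _).tsum_mul_left]
    _ = ∑' m : ℕ, (B ^ (m + n)) v s := by
      simp only [← Matrix.mul_apply, ← pow_add, add_comm n]

end Semiring

variable [Ring R] [IsTopologicalRing R] [T2Space R] {B : Matrix V V R} {s : V}

theorem tendsto_pow_mulVec_greenVector (hs : ∀ v, Summable fun n : ℕ => (B ^ n) v s) (v : V) :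
    Tendsto (fun n => (B ^ n *ᵥ greenVector B s) v) atTop (𝓝 0) := by
  simpa only [pow_mulVec_greenVector hs] using tendsto_sum_nat_add fun n => (B ^ n) v s

theorem greenVector_eq_single_add_mulVec (hs : ∀ v, Summable fun n : ℕ => (B ^ n) v s) :
    greenVector B s = Pi.single s 1 + B *ᵥ greenVector B s := by
  funext v
  have htail := pow_mulVec_greenVector hs 1 v
  rw [pow_one] at htail
  rw [Pi.add_apply, htail, greenVector, (hs v).tsum_eq_zero_add, pow_zero, Matrix.one_apply,
    Pi.single_apply]

end GreenVector

theorem eq_smul_greenVector_of_abs_le [DecidableEq V] {R : Type*} [CommRing R] [LinearOrder R]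
    [IsOrderedRing R] [TopologicalSpace R] [OrderClosedTopology R] [IsTopologicalRing R]
    {B : Matrix V V R} (hB : ∀ v w, 0 ≤ B v w) {s : V}
    (hs : ∀ v, Summable fun n : ℕ => (B ^ n) v s) {ψ : V → R} {c K : R}
    (hψ : ψ = Pi.single s c + B *ᵥ ψ) (hle : ∀ v, |ψ v| ≤ K * greenVector B s v) :
    ψ = c • greenVector B s := by
  set G := greenVector B s
  have hG : c • G = Pi.single s c + B *ᵥ (c • G) :=
    calc c • G
      _ = c • (Pi.single s 1 + B *ᵥ G) := congrArg (c • ·) (greenVector_eq_single_add_mulVec hs)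
      _ = Pi.single s c + B *ᵥ (c • G) := by
        rw [smul_add, ← Pi.single_smul, smul_eq_mul, mul_one, Matrix.mulVec_smul]
  have hfix : B *ᵥ (ψ - c • G) = ψ - c • G := by
    conv_rhs => rw [hψ, hG]
    rw [Matrix.mulVec_sub, add_sub_add_left_eq_sub]
  have hbound (v : V) : |(ψ - c • G) v| ≤ ((K + |c|) • G) v :=
    calc |ψ v - c * G v|
      _ ≤ |ψ v| + |c * G v| := abs_sub _ _
      _ = |ψ v| + |c| * G v := by rw [abs_mul, abs_of_nonneg (greenVector_nonneg hB s v)]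
      _ ≤ K * G v + |c| * G v := by gcongr; exact hle v
      _ = (K + |c|) * G v := (add_mul _ _ _).symm
  have hvanish (v : V) : Tendsto (fun n => (B ^ n *ᵥ ((K + |c|) • G)) v) atTop (𝓝 0) := by
    simpa only [Matrix.mulVec_smul, Pi.smul_apply, smul_zero] using
      (tendsto_pow_mulVec_greenVector hs v).const_smul (K + |c|)
  exact sub_eq_zero.mp (eq_zero_of_mulVec_eq_self_of_abs_le hB hfix hbound hvanish)

section Sink

variable [DecidableEq V] {B : Matrix V V ℝ} {s : V} {ψ : V → ℝ}

theorem IsAlmostHarmonic.eq_single_add_mulVec (hψ : IsAlmostHarmonic B ψ) (hs : IsSink B s)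
    (hzero : ∀ v, IsSink B v → v ≠ s → ψ v = 0) : ψ = Pi.single s (ψ s) + B *ᵥ ψ := by
  funext v
  by_cases hv : IsSink B v
  · have hBψ : (B *ᵥ ψ) v = 0 := by
      simp only [Matrix.mulVec, dotProduct, hv _, zero_mul, sum_const_zero]
    rw [Pi.add_apply, hBψ, add_zero]
    obtain rfl | hvs := eq_or_ne v s
    · rw [Pi.single_eq_same]
    · rw [hzero v hv hvs, Pi.single_eq_of_ne hvs]
  · have hvs : v ≠ s := fun h => hv (h ▸ hs)
    rw [Pi.add_apply, Pi.single_eq_of_ne hvs, zero_add]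
    exact (hψ v hv).symm

theorem IsAlmostHarmonic.eq_smul_greenVector (hψ : IsAlmostHarmonic B ψ)
    (hB : ∀ v w, 0 ≤ B v w) (hs : IsSummableSink B s) {K : ℝ}
    (hle : ∀ v, |ψ v| ≤ K * greenVector B s v) : ψ = ψ s • greenVector B s := by
  have hzero (v : V) (hv : IsSink B v) (hvs : v ≠ s) : ψ v = 0 := by
    have h := hle v
    rwa [greenVector_apply_of_row_eq_zero hv, Matrix.one_apply_ne hvs, mul_zero,
      abs_nonpos_iff] at h
  exact eq_smul_greenVector_of_abs_le hB hs.2 (hψ.eq_single_add_mulVec hs.1 hzero) hle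

theorem phiSink_eq_of_eq_smul_greenVector {c : ℝ} (hψ : ψ = c • greenVector B s)
    (hsum : ∑ v, ψ v = 1) : phiSink B s = ψ := by
  have hc : c * ∑ v, greenVector B s v = 1 := by
    rw [← hsum, hψ, mul_sum]
    rfl
  funext v
  calc greenVector B s v / ∑ w, greenVector B s w
    _ = c * greenVector B s v := by
      rw [div_eq_iff (right_ne_zero_of_mul_eq_one hc), mul_right_comm, hc, one_mul]
    _ = ψ v := by rw [hψ, Pi.smul_apply, smul_eq_mul]

theorem IsAlmostHarmonic.eq_phiSink_of_le_mul (hψ : IsAlmostHarmonic B ψ)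
    (hB : ∀ v w, 0 ≤ B v w) (hs : IsSummableSink B s) (hnonneg : ∀ v, 0 ≤ ψ v)
    (hsum : ∑ v, ψ v = 1) {K : ℝ} (hle : ∀ v, ψ v ≤ K * phiSink B s v) : ψ = phiSink B s := by
  have hdom (v : V) : |ψ v| ≤ K / (∑ w, greenVector B s w) * greenVector B s v :=
    calc |ψ v|
      _ = ψ v := abs_of_nonneg (hnonneg v)
      _ ≤ K * (greenVector B s v / ∑ w, greenVector B s w) := hle v
      _ = K / (∑ w, greenVector B s w) * greenVector B s v := by ring
  exact (phiSink_eq_of_eq_smul_greenVector (hψ.eq_smul_greenVector hB hs hdom) hsum).symm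

end Sink

/-- For a `B`-summable sink `s`, `φ^s` is an extreme point of the convex set of normalized
almost `B`-harmonic vectors. -/
theorem phiSink_extreme {V : Type*} [Fintype V] [Nonempty V] [DecidableEq V]
    (B : Matrix V V ℝ) (hB : ∀ v w, 0 ≤ B v w)
    (s : V) (hs : IsSummableSink B s)
    (ψ₁ ψ₂ : V → ℝ)
    (h₁ : (∀ v, 0 ≤ ψ₁ v) ∧ (∑ v, ψ₁ v = 1) ∧ IsAlmostHarmonic B ψ₁)
    (h₂ : (∀ v, 0 ≤ ψ₂ v) ∧ (∑ v, ψ₂ v = 1) ∧ IsAlmostHarmonic B ψ₂)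
    (t : ℝ) (ht0 : 0 < t) (ht1 : t < 1)
    (heq : phiSink B s = fun v => t * ψ₁ v + (1 - t) * ψ₂ v) :
    ψ₁ = phiSink B s ∧ ψ₂ = phiSink B s := by
  obtain ⟨hnonneg₁, hsum₁, hψ₁⟩ := h₁
  obtain ⟨hnonneg₂, hsum₂, hψ₂⟩ := h₂
  have ht1' : 0 < 1 - t := sub_pos.mpr ht1
  have hle₁ (v : V) : ψ₁ v ≤ t⁻¹ * phiSink B s v := by
    rw [le_inv_mul_iff₀ ht0, heq]
    exact le_add_of_nonneg_right (mul_nonneg ht1'.le (hnonneg₂ v))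
  have hle₂ (v : V) : ψ₂ v ≤ (1 - t)⁻¹ * phiSink B s v := by
    rw [le_inv_mul_iff₀ ht1', heq]
    exact le_add_of_nonneg_left (mul_nonneg ht0.le (hnonneg₁ v))
  exact ⟨hψ₁.eq_phiSink_of_le_mul hB hs hnonneg₁ hsum₁ hle₁,
    hψ₂.eq_phiSink_of_le_mul hB hs hnonneg₂ hsum₂ hle₂⟩
end

section
/- Let ψ be a normalized B-almost harmonic vector. Then there are a unique (possibly empty) set S of B-summable sinks of B, unique positive numbers t_s ∈ (0,1] for s ∈ S, and a unique B-harmonic vector h ∈ [0,∞)^V such that ψ = h + Σ_{s∈S} t_s φ^s. -/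
open Filter Finset

variable {V : Type*} [Fintype V]

/-!
This is a Riesz decomposition. The vector `u = ψ - B ψ` equals `ψ` at the sinks and vanishes
elsewhere, so it is nonnegative, and telescoping gives `∑_{n < N} Bⁿ u = ψ - B^N ψ ≤ ψ`. Hence
`∑ₙ Bⁿ` converges on every column `s` with `u s ≠ 0`, its sum `G` satisfies `G u ≤ ψ`, and
`h = ψ - G u` is harmonic because `(1 - B) G u = u`. Since `φ^s` is the `s`-th column of `G` divided
by its sum, `G u` is a combination of the `φ^s`. Conversely, applying `1 - B` to any decomposition
recovers `u`, and `u` determines `S`, `t` and `h`.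
-/

open scoped Matrix

lemma mul_le_mulVec {ι R : Type*} [Semiring R] [PartialOrder R] [IsOrderedRing R]
    {A : Matrix ι V R} {u : V → R} {i : ι} (hA : ∀ w, 0 ≤ A i w) (hu : 0 ≤ u) (s : V) :
    A i s * u s ≤ (A *ᵥ u) i :=
  single_le_sum (f := fun w => A i w * u w) (fun w _ => mul_nonneg (hA w) (hu w)) (mem_univ s)

section RieszDecomposition

variable [DecidableEq V] {B : Matrix V V ℝ} {ψ u : V → ℝ} {s : V}

/-- The charge `(1 - B) ψ` of a vector: `ψ` is harmonic when it vanishes, and superharmonic when it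
is nonnegative. -/
def charge (B : Matrix V V ℝ) (ψ : V → ℝ) : V → ℝ := (1 - B) *ᵥ ψ

/-- `∑ₙ Bⁿ` converges on the column `s`; this is `IsSummableSink` for a vertex `s` that need not be
a sink. -/
def IsSummableVertex (B : Matrix V V ℝ) (s : V) : Prop := ∀ v, Summable fun n : ℕ => (B ^ n) v s

/-- The Green matrix `∑ₙ Bⁿ`, taken entrywise; the column `s` is meaningful only when
`IsSummableVertex B s`, as a divergent series has the value `0`. -/
noncomputable def greenMatrix (B : Matrix V V ℝ) : Matrix V V ℝ :=
  Matrix.of fun v s => ∑' n : ℕ, (B ^ n) v s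

/-- The sum of the column `s` of the Green matrix, which is the normalizing constant of `φ^s`. -/
noncomputable def greenMass (B : Matrix V V ℝ) (s : V) : ℝ := ∑ v, greenMatrix B v s

/-- The triple `(S, t, h)` of the Riesz decomposition of `ψ`: the support of the charge, the
coefficients of the vectors `φ^s`, and the harmonic part. -/
noncomputable def rieszDecomposition (B : Matrix V V ℝ) (ψ : V → ℝ) :
    Finset V × (V → ℝ) × (V → ℝ) :=
  (univ.filter (charge B ψ · ≠ 0), charge B ψ * greenMass B, ψ - greenMatrix B *ᵥ charge B ψ)

lemma charge_apply (B : Matrix V V ℝ) (ψ : V → ℝ) (v : V) :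
    charge B ψ v = ψ v - ∑ w, B v w * ψ w := by
  rw [charge, Matrix.sub_mulVec, Matrix.one_mulVec]
  rfl

lemma isHarmonic_iff_charge_eq_zero : IsHarmonic B ψ ↔ charge B ψ = 0 := by
  simp only [IsHarmonic, funext_iff, charge_apply, Pi.zero_apply, sub_eq_zero, eq_comm (b := ψ _)]

lemma sum_range_pow_mulVec_charge (B : Matrix V V ℝ) (ψ : V → ℝ) (N : ℕ) :
    ∑ n ∈ range N, B ^ n *ᵥ charge B ψ = ψ - B ^ N *ᵥ ψ := by
  rw [← Matrix.sum_mulVec, charge, Matrix.mulVec_mulVec, geom_sum_mul_neg, Matrix.sub_mulVec,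
    Matrix.one_mulVec]

lemma sum_range_pow_mulVec_charge_le (hB : ∀ v w, 0 ≤ B v w) (hψ : 0 ≤ ψ) (N : ℕ) :
    ∑ n ∈ range N, B ^ n *ᵥ charge B ψ ≤ ψ := by
  rw [sum_range_pow_mulVec_charge]
  exact sub_le_self ψ fun v =>
    dotProduct_nonneg_of_nonneg (fun w => Matrix.pow_apply_nonneg hB N v w) hψ

lemma isSummableVertex_of_charge_ne_zero (hB : ∀ v w, 0 ≤ B v w) (hψ : 0 ≤ ψ)
    (hcharge : 0 ≤ charge B ψ) (hs : charge B ψ s ≠ 0) : IsSummableVertex B s := by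
  intro v
  have hpos : 0 < charge B ψ s := (hcharge s).lt_of_ne' hs
  refine summable_of_sum_range_le (c := ψ v / charge B ψ s)
    (fun n => Matrix.pow_apply_nonneg hB n v s) fun N => ?_
  rw [le_div_iff₀ hpos, sum_mul]
  calc ∑ n ∈ range N, (B ^ n) v s * charge B ψ s
      ≤ ∑ n ∈ range N, (B ^ n *ᵥ charge B ψ) v :=
        sum_le_sum fun n _ => mul_le_mulVec (fun w => Matrix.pow_apply_nonneg hB n v w) hcharge s
    _ = (∑ n ∈ range N, B ^ n *ᵥ charge B ψ) v := (Finset.sum_apply v _ _).symm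
    _ ≤ ψ v := sum_range_pow_mulVec_charge_le hB hψ N v

lemma hasSum_pow_mulVec (hu : ∀ s, u s ≠ 0 → IsSummableVertex B s) :
    HasSum (fun n : ℕ => B ^ n *ᵥ u) (greenMatrix B *ᵥ u) := by
  refine Pi.hasSum.2 fun v => hasSum_sum fun s _ => ?_
  by_cases hs : u s = 0
  · simpa only [hs, mul_zero] using hasSum_zero
  · exact (hu s hs v).hasSum.mul_right (u s)

lemma charge_greenMatrix_mulVec (hu : ∀ s, u s ≠ 0 → IsSummableVertex B s) :
    charge B (greenMatrix B *ᵥ u) = u := by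
  have hsum := hasSum_pow_mulVec hu
  have hmul : HasSum (fun n : ℕ => B ^ (n + 1) *ᵥ u) (B *ᵥ greenMatrix B *ᵥ u) := by
    simpa only [Function.comp_def, Matrix.mulVecLin_apply, Matrix.mulVec_mulVec, ← pow_succ']
      using hsum.map B.mulVecLin (continuous_const.matrix_mulVec continuous_id)
  have hshift : HasSum (fun n : ℕ => B ^ (n + 1) *ᵥ u) (greenMatrix B *ᵥ u - u) := by
    simpa only [sum_range_one, pow_zero, Matrix.one_mulVec] using (hasSum_nat_add_iff' 1).2 hsum
  rw [charge, Matrix.sub_mulVec, Matrix.one_mulVec, hmul.unique hshift, sub_sub_cancel]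

lemma greenMatrix_nonneg (hB : ∀ v w, 0 ≤ B v w) (v s : V) : 0 ≤ greenMatrix B v s :=
  tsum_nonneg fun n => Matrix.pow_apply_nonneg hB n v s

lemma greenMass_pos (hB : ∀ v w, 0 ≤ B v w) (hs : IsSummableVertex B s) : 0 < greenMass B s :=
  calc (0 : ℝ) < (B ^ 0) s s := by rw [pow_zero, Matrix.one_apply_eq]; exact one_pos
    _ ≤ greenMatrix B s s := (hs s).le_tsum 0 fun n _ => Matrix.pow_apply_nonneg hB n s s
    _ ≤ greenMass B s := single_le_sum (fun v _ => greenMatrix_nonneg hB v s) (mem_univ s)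

lemma greenMatrix_mulVec_charge_le (hB : ∀ v w, 0 ≤ B v w) (hψ : 0 ≤ ψ)
    (hsummable : ∀ s, charge B ψ s ≠ 0 → IsSummableVertex B s) :
    greenMatrix B *ᵥ charge B ψ ≤ ψ :=
  le_of_tendsto' (hasSum_pow_mulVec hsummable).tendsto_sum_nat
    (sum_range_pow_mulVec_charge_le hB hψ)

lemma charge_mul_greenMass_le_sum (hB : ∀ v w, 0 ≤ B v w) (hψ : 0 ≤ ψ)
    (hcharge : 0 ≤ charge B ψ) (s : V) : charge B ψ s * greenMass B s ≤ ∑ v, ψ v := by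
  have hsummable : ∀ s, charge B ψ s ≠ 0 → IsSummableVertex B s := fun _ =>
    isSummableVertex_of_charge_ne_zero hB hψ hcharge
  rw [mul_comm, greenMass, sum_mul]
  exact sum_le_sum fun v _ => (mul_le_mulVec (greenMatrix_nonneg hB v) hcharge s).trans
    (greenMatrix_mulVec_charge_le hB hψ hsummable v)

lemma isHarmonic_sub_greenMatrix_mulVec_charge
    (hsummable : ∀ s, charge B ψ s ≠ 0 → IsSummableVertex B s) :
    IsHarmonic B (ψ - greenMatrix B *ᵥ charge B ψ) := by
  rw [isHarmonic_iff_charge_eq_zero, charge, Matrix.mulVec_sub, ← charge, ← charge,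
    charge_greenMatrix_mulVec hsummable, sub_self]

lemma sum_mul_phiSink {S : Finset V} {t : V → ℝ} (ht : ∀ s, s ∉ S → t s = 0) (v : V) :
    ∑ s ∈ S, t s * phiSink B s v = (greenMatrix B *ᵥ fun s => t s / greenMass B s) v :=
  calc ∑ s ∈ S, t s * phiSink B s v
      = ∑ s, t s * phiSink B s v :=
        sum_subset (subset_univ S) fun s _ hs => by rw [ht s hs, zero_mul]
    _ = ∑ s, greenMatrix B v s * (t s / greenMass B s) :=
        sum_congr rfl fun s _ => mul_div_left_comm (t s) (greenMatrix B v s) (greenMass B s)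

lemma greenMatrix_mulVec_eq_sum_phiSink (hB : ∀ v w, 0 ≤ B v w)
    (hu : ∀ s, u s ≠ 0 → IsSummableVertex B s) (v : V) :
    (greenMatrix B *ᵥ u) v = ∑ s with u s ≠ 0, (u * greenMass B) s * phiSink B s v := by
  have hcancel : (fun s => (u * greenMass B) s / greenMass B s) = u := funext fun s =>
    mul_div_cancel_of_imp fun hmass => by_contra fun hs => (greenMass_pos hB (hu s hs)).ne' hmass
  rw [sum_mul_phiSink (fun s hs => ?_), hcancel]
  rw [Pi.mul_apply, show u s = 0 by simpa using hs, zero_mul]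

lemma charge_eq_div_greenMass {S : Finset V} {t h : V → ℝ}
    (hS : ∀ s ∈ S, IsSummableVertex B s) (ht : ∀ s, s ∉ S → t s = 0) (hh : IsHarmonic B h)
    (hdec : ∀ v, ψ v = h v + ∑ s ∈ S, t s * phiSink B s v) :
    charge B ψ = fun s => t s / greenMass B s := by
  have hsupp : ∀ s, t s / greenMass B s ≠ 0 → IsSummableVertex B s := fun s hs =>
    hS s (by_contra fun hsS => hs (by rw [ht s hsS, zero_div]))
  have hψ : ψ = h + greenMatrix B *ᵥ fun s => t s / greenMass B s :=
    funext fun v => by rw [hdec v, sum_mul_phiSink ht, Pi.add_apply]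
  rw [hψ, charge, Matrix.mulVec_add, ← charge, ← charge, isHarmonic_iff_charge_eq_zero.1 hh,
    charge_greenMatrix_mulVec hsupp, zero_add]

lemma eq_rieszDecomposition {S : Finset V} {t h : V → ℝ} (hB : ∀ v w, 0 ≤ B v w)
    (hS : ∀ s ∈ S, IsSummableVertex B s) (ht_ne : ∀ s ∈ S, t s ≠ 0) (ht : ∀ s, s ∉ S → t s = 0)
    (hh : IsHarmonic B h) (hdec : ∀ v, ψ v = h v + ∑ s ∈ S, t s * phiSink B s v) :
    (S, t, h) = rieszDecomposition B ψ := by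
  have hcharge := charge_eq_div_greenMass hS ht hh hdec
  have hmass : ∀ s ∈ S, greenMass B s ≠ 0 := fun s hs => (greenMass_pos hB (hS s hs)).ne'
  rw [rieszDecomposition]
  refine Prod.ext ?_ (Prod.ext ?_ ?_)
  · ext s
    by_cases hs : s ∈ S
    · simp [hcharge, hs, ht_ne s hs, hmass s hs]
    · simp [hcharge, hs, ht s hs]
  · ext s
    by_cases hs : s ∈ S
    · simp [hcharge, div_mul_cancel₀ _ (hmass s hs)]
    · simp [hcharge, ht s hs]
  · ext v
    simp only [Pi.sub_apply, hdec v, hcharge, sum_mul_phiSink ht, add_sub_cancel_right]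

theorem almostHarmonic_decomposition_general (hB : ∀ v w, 0 ≤ B v w) (T : Set V)
    (hψ : ∀ v, 0 ≤ ψ v) (hsuper : ∀ v ∈ T, ∑ w, B v w * ψ w ≤ ψ v)
    (hharm : ∀ v ∉ T, ∑ w, B v w * ψ w = ψ v) :
    ∃! p : Finset V × (V → ℝ) × (V → ℝ),
      (∀ s ∈ p.1, s ∈ T ∧ IsSummableVertex B s) ∧
      (∀ s ∈ p.1, 0 < p.2.1 s ∧ p.2.1 s ≤ ∑ v, ψ v) ∧
      (∀ s, s ∉ p.1 → p.2.1 s = 0) ∧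
      (∀ v, 0 ≤ p.2.2 v) ∧ IsHarmonic B p.2.2 ∧
      (∀ v, ψ v = p.2.2 v + ∑ s ∈ p.1, p.2.1 s * phiSink B s v) := by
  have hcharge_zero : ∀ v ∉ T, charge B ψ v = 0 := fun v hv => by
    rw [charge_apply, hharm v hv, sub_self]
  have hcharge : 0 ≤ charge B ψ := fun v => by
    by_cases hv : v ∈ T
    · simpa only [charge_apply, Pi.zero_apply, sub_nonneg] using hsuper v hv
    · exact (hcharge_zero v hv).ge
  have hsummable : ∀ s, charge B ψ s ≠ 0 → IsSummableVertex B s := fun _ =>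
    isSummableVertex_of_charge_ne_zero hB hψ hcharge
  refine ⟨rieszDecomposition B ψ, ⟨fun s hs => ?_, fun s hs => ?_, fun s hs => ?_,
      sub_nonneg.2 (greenMatrix_mulVec_charge_le hB hψ hsummable),
      isHarmonic_sub_greenMatrix_mulVec_charge hsummable, fun v => ?_⟩, ?_⟩
  · have hne : charge B ψ s ≠ 0 := (mem_filter.1 hs).2
    exact ⟨by_contra fun hsT => hne (hcharge_zero s hsT), hsummable s hne⟩
  · have hne : charge B ψ s ≠ 0 := (mem_filter.1 hs).2
    exact ⟨mul_pos ((hcharge s).lt_of_ne' hne) (greenMass_pos hB (hsummable s hne)),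
      charge_mul_greenMass_le_sum hB hψ hcharge s⟩
  · have hzero : charge B ψ s = 0 := by simpa [rieszDecomposition] using hs
    exact mul_eq_zero_of_left hzero (greenMass B s)
  · calc ψ v = (ψ - greenMatrix B *ᵥ charge B ψ) v + (greenMatrix B *ᵥ charge B ψ) v :=
          (sub_add_cancel (ψ v) _).symm
      _ = _ := by rw [greenMatrix_mulVec_eq_sum_phiSink hB hsummable]; rfl
  · rintro ⟨S, t, h⟩ ⟨hS, htS, ht, -, hh, hdec⟩
    exact eq_rieszDecomposition hB (fun s hs => (hS s hs).2)
      (fun s hs => (htS s hs).1.ne') ht hh hdec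

end RieszDecomposition

/-- Every normalized almost `B`-harmonic vector `ψ` decomposes uniquely as
`ψ = h + Σ_{s ∈ S} t_s φ^s` with `S` a set of `B`-summable sinks, `t_s ∈ (0,1]`
and `h` a nonnegative `B`-harmonic vector. -/
theorem almostHarmonic_decomposition {V : Type*} [Fintype V] [Nonempty V] [DecidableEq V]
    (B : Matrix V V ℝ) (hB : ∀ v w, 0 ≤ B v w)
    (ψ : V → ℝ) (hψ : ∀ v, 0 ≤ ψ v) (hnorm : ∑ v, ψ v = 1)
    (halm : IsAlmostHarmonic B ψ) :
    ∃! p : Finset V × (V → ℝ) × (V → ℝ),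
      (∀ s ∈ p.1, IsSummableSink B s) ∧
      (∀ s ∈ p.1, 0 < p.2.1 s ∧ p.2.1 s ≤ 1) ∧
      (∀ s, s ∉ p.1 → p.2.1 s = 0) ∧
      (∀ v, 0 ≤ p.2.2 v) ∧ IsHarmonic B p.2.2 ∧
      (∀ v, ψ v = p.2.2 v + ∑ s ∈ p.1, p.2.1 s * phiSink B s v) := by
  have hsuper : ∀ v ∈ {s | IsSink B s}, ∑ w, B v w * ψ w ≤ ψ v := fun v hv => by
    simpa only [hv _, zero_mul, sum_const_zero] using hψ v
  rw [← hnorm]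
  exact almostHarmonic_decomposition_general hB {s | IsSink B s} hψ hsuper halm
end

section
/- Let C be a B-harmonic component. Then there exists a unique normalized B-harmonic vector φ such that Σ_{w∈C} B_{vw} φ_w = φ_v for every v ∈ C and such that φ_v ≠ 0 if and only if v ∈ C̄ (the closure of C). -/
open Filter Finset

variable {V : Type*} [Fintype V]

/-!
On the component `C`, the irreducible matrix `B^C` has spectral radius `1`, so by Perron–Frobenius
its fixed vectors are spanned by a single positive one. On `D = C̄ ∖ C` the spectral radius is
below `1`, so the Neumann series of `B^D` converges and solves the Dirichlet problem with given
values on `C` and `0` off `C̄`, uniquely and nonnegatively. Since no nonzero entry of `B` leads from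
`C` into `D`, or from outside `C̄` into `C̄`, the extension of the Perron vector is harmonic.
Conversely a solution is determined by its values on `C`, hence up to a factor, which the
normalization fixes.

Perron–Frobenius is obtained from the largest `r` for which `r x ≤ A x` has a nonzero solution
`x ≥ 0`. The identity `A ^ k x = r ^ k x` for the positive eigenvector `x` found there
squeezes `‖A ^ k‖` between multiples of `r ^ k`, so `r` is the spectral radius.
-/

section

open scoped Matrix Topology

section NonnegativeMatrix

theorem mulVec_nonneg_of_nonneg {m n R : Type*} [Fintype n] [Semiring R] [PartialOrder R]
    [IsOrderedRing R] {A : Matrix m n R} (hA : ∀ i j, 0 ≤ A i j) {x : n → R} (hx : 0 ≤ x) :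
    0 ≤ A *ᵥ x :=
  fun i => sum_nonneg fun j _ => mul_nonneg (hA i j) (hx j)

theorem mulVec_apply_pos {m n R : Type*} [Fintype n] [Semiring R] [PartialOrder R]
    [IsStrictOrderedRing R] {A : Matrix m n R} (hA : ∀ i j, 0 ≤ A i j) {x : n → R} (hx : 0 ≤ x)
    {i : m} {j : n} (hij : 0 < A i j) (hj : 0 < x j) : 0 < (A *ᵥ x) i :=
  sum_pos' (fun l _ => mul_nonneg (hA i l) (hx l)) ⟨j, mem_univ j, mul_pos hij hj⟩

theorem pow_mulVec_eq_pow_smul {n R : Type*} [Fintype n] [DecidableEq n] [CommSemiring R]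
    {A : Matrix n n R} {r : R} {x : n → R} (h : A *ᵥ x = r • x) (k : ℕ) :
    A ^ k *ᵥ x = r ^ k • x := by
  induction k with
  | zero => simp
  | succ k ih => rw [pow_succ, ← Matrix.mulVec_mulVec, h, Matrix.mulVec_smul, ih, smul_smul,
      ← pow_succ']

theorem eigenvector_apply_pos {n R : Type*} [Fintype n] [DecidableEq n] [CommSemiring R]
    [PartialOrder R] [IsStrictOrderedRing R] {A : Matrix n n R} (hA : ∀ i j, 0 ≤ A i j)
    {r : R} {x : n → R} (hx : 0 ≤ x) (h : A *ᵥ x = r • x) {k : ℕ} {i j : n}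
    (hij : 0 < (A ^ k) i j) (hj : 0 < x j) : 0 < x i := by
  have hpos := mulVec_apply_pos (Matrix.pow_apply_nonneg hA k) hx hij hj
  rw [pow_mulVec_eq_pow_smul h, Pi.smul_apply, smul_eq_mul] at hpos
  exact (hx i).lt_of_ne' (right_ne_zero_of_mul hpos.ne')

theorem exists_smul_le_apply_eq {n K : Type*} [Finite n] [Nonempty n] [Field K] [LinearOrder K]
    [IsStrictOrderedRing K] {x : n → K} (hx : ∀ i, 0 < x i) (y : n → K) :
    ∃ (t : K) (i : n), t • x ≤ y ∧ t * x i = y i := by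
  obtain ⟨i, hi⟩ := Finite.exists_min fun j => y j / x j
  exact ⟨y i / x i, i, fun j => (le_div_iff₀ (hx j)).1 (hi j), div_mul_cancel₀ _ (hx i).ne'⟩

end NonnegativeMatrix

section Irreducible

variable {n : Type*} [Fintype n]

theorem exists_pos_commute_of_isIrreducible {R : Type*} [Ring R] [LinearOrder R]
    [IsStrictOrderedRing R] {A : Matrix n n R} (hA : A.IsIrreducible) :
    ∃ P : Matrix n n R, (∀ i j, 0 < P i j) ∧ Commute A P := by
  classical
  choose k _ hk using (Matrix.isIrreducible_iff_exists_pow_pos hA.nonneg).1 hA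
  have hnonneg (i j a b : n) : 0 ≤ (A ^ k i j) a b := Matrix.pow_apply_nonneg hA.nonneg _ a b
  refine ⟨∑ i, ∑ j, A ^ k i j, fun a b => ?_, Commute.sum_right _ _ _ fun i _ =>
    Commute.sum_right _ _ _ fun j _ => Commute.self_pow A _⟩
  simp only [Matrix.sum_apply]
  exact sum_pos' (fun i _ => sum_nonneg fun j _ => hnonneg i j a b)
    ⟨a, mem_univ a, sum_pos' (fun j _ => hnonneg a j a b) ⟨b, mem_univ b, hk a b⟩⟩

theorem eigenvector_apply_pos_of_isIrreducible {R : Type*} [CommRing R] [LinearOrder R]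
    [IsStrictOrderedRing R] {A : Matrix n n R} (hA : A.IsIrreducible) {r : R} {x : n → R}
    (hx : 0 ≤ x) (hx0 : x ≠ 0) (h : A *ᵥ x = r • x) (i : n) : 0 < x i := by
  classical
  obtain ⟨_, j, hj⟩ := Pi.lt_def.1 (hx.lt_of_ne' hx0)
  obtain ⟨k, _, hk⟩ := (Matrix.isIrreducible_iff_exists_pow_pos hA.nonneg).1 hA i j
  exact eigenvector_apply_pos hA.nonneg hx h hk hj

theorem eigenvector_eq_smul_of_isIrreducible {K : Type*} [Field K] [LinearOrder K]
    [IsStrictOrderedRing K] {A : Matrix n n K} (hA : A.IsIrreducible) {r : K} {x y : n → K}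
    (hx : ∀ i, 0 < x i) (hAx : A *ᵥ x = r • x) (hAy : A *ᵥ y = r • y) :
    ∃ t : K, y = t • x := by
  cases isEmpty_or_nonempty n
  · exact ⟨0, Subsingleton.elim _ _⟩
  obtain ⟨t, i, hle, hi⟩ := exists_smul_le_apply_eq hx y
  refine ⟨t, sub_eq_zero.1 ?_⟩
  by_contra hne
  have heigen : A *ᵥ (y - t • x) = r • (y - t • x) := by
    rw [Matrix.mulVec_sub, Matrix.mulVec_smul, hAx, hAy, smul_sub, smul_comm]
  have hpos := eigenvector_apply_pos_of_isIrreducible hA (sub_nonneg.2 hle) hne heigen i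
  exact hpos.ne' (sub_eq_zero.2 hi.symm)

end Irreducible

section CollatzWielandt

variable {n : Type*} [Fintype n] {A : Matrix n n ℝ}

/-- The Collatz–Wielandt set of a matrix: the `s ≥ 0` for which `s y ≤ A y` has a nonzero
solution `y ≥ 0`, normalized here to have entries summing to `1`. Its maximum is the Perron root. -/
def collatzWielandtSet (A : Matrix n n ℝ) : Set ℝ :=
  {s | 0 ≤ s ∧ ∃ y ∈ stdSimplex ℝ n, s • y ≤ A *ᵥ y}

theorem mem_collatzWielandtSet_of_smul_le {s : ℝ} (hs : 0 ≤ s) {y : n → ℝ} (hy : 0 < y)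
    (h : s • y ≤ A *ᵥ y) : s ∈ collatzWielandtSet A := by
  have hsum : 0 < ∑ i, y i := Fintype.sum_pos hy
  refine ⟨hs, (∑ i, y i)⁻¹ • y, ⟨fun i => ?_, ?_⟩, ?_⟩
  · exact mul_nonneg (inv_nonneg.2 hsum.le) (hy.le i)
  · simp only [Pi.smul_apply, smul_eq_mul, ← mul_sum, inv_mul_cancel₀ hsum.ne']
  · rw [Matrix.mulVec_smul, smul_comm]
    exact smul_le_smul_of_nonneg_left h (inv_nonneg.2 hsum.le)

theorem le_sum_of_mem_collatzWielandtSet (hA : ∀ i j, 0 ≤ A i j) {s : ℝ}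
    (hs : s ∈ collatzWielandtSet A) : s ≤ ∑ i, ∑ j, A i j := by
  obtain ⟨-, y, hy, hle⟩ := hs
  calc s = ∑ i, s * y i := by rw [← mul_sum, hy.2, mul_one]
    _ ≤ ∑ i, ∑ j, A i j * y j := sum_le_sum fun i _ => hle i
    _ ≤ ∑ i, ∑ j, A i j := sum_le_sum fun i _ => sum_le_sum fun j _ =>
        mul_le_of_le_one_right (hA i j) (mem_Icc_of_mem_stdSimplex hy j).2

theorem isCompact_collatzWielandtSet (hA : ∀ i j, 0 ≤ A i j) :
    IsCompact (collatzWielandtSet A) := by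
  have hclosed : IsClosed {p : ℝ × (n → ℝ) | p.1 • p.2 ≤ A *ᵥ p.2} :=
    isClosed_le (continuous_fst.smul continuous_snd)
      (continuous_const.matrix_mulVec continuous_snd)
  have hcompact := ((isCompact_Icc (a := 0) (b := ∑ i, ∑ j, A i j)).prod
    (isCompact_stdSimplex ℝ n)).inter_right hclosed
  convert hcompact.image continuous_fst using 1
  ext s
  constructor
  · rintro hs
    obtain ⟨hs0, y, hy, hle⟩ := id hs
    exact ⟨(s, y), ⟨⟨⟨hs0, le_sum_of_mem_collatzWielandtSet hA hs⟩, hy⟩, hle⟩, rfl⟩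
  · rintro ⟨⟨s, y⟩, ⟨⟨hs, hy⟩, hle⟩, rfl⟩
    exact ⟨hs.1, y, hy, hle⟩

theorem exists_isGreatest_collatzWielandtSet [Nonempty n] (hA : ∀ i j, 0 ≤ A i j) :
    ∃ r, IsGreatest (collatzWielandtSet A) r := by
  classical
  have hsimplex := single_mem_stdSimplex ℝ (Classical.arbitrary n)
  refine (isCompact_collatzWielandtSet hA).exists_isGreatest ⟨0, le_rfl, _, hsimplex, ?_⟩
  rw [zero_smul]
  exact mulVec_nonneg_of_nonneg hA hsimplex.1

/- A positive matrix commuting with `A` turns the defect `A x - r x ≥ 0` into an entrywise positive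
one, which leaves room to increase `r`. -/
theorem exists_gt_mem_collatzWielandtSet (hA : A.IsIrreducible) {r : ℝ} (hr : 0 ≤ r)
    {x : n → ℝ} (hx : 0 ≤ x) (hle : r • x ≤ A *ᵥ x) (hne : A *ᵥ x ≠ r • x) :
    ∃ s ∈ collatzWielandtSet A, r < s := by
  classical
  obtain ⟨P, hP, hcomm⟩ := exists_pos_commute_of_isIrreducible hA
  have hPpos {z : n → ℝ} (hz : 0 ≤ z) (hz0 : z ≠ 0) (i : n) : 0 < (P *ᵥ z) i := by
    obtain ⟨_, j, hj⟩ := Pi.lt_def.1 (hz.lt_of_ne' hz0)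
    exact mulVec_apply_pos (fun i j => (hP i j).le) hz (hP i j) hj
  have hy := hPpos hx (by rintro rfl; simp at hne)
  have hdefect := hPpos (sub_nonneg.2 hle) (sub_ne_zero.2 hne)
  obtain ⟨i₀, -⟩ := Function.ne_iff.1 hne
  have : Nonempty n := ⟨i₀⟩
  obtain ⟨ε, i, hεle, hεi⟩ := exists_smul_le_apply_eq hy (P *ᵥ (A *ᵥ x - r • x))
  have hε : 0 < ε := pos_of_mul_pos_left (hεi ▸ hdefect i) (hy i).le
  refine ⟨r + ε, mem_collatzWielandtSet_of_smul_le (by positivity)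
    (Pi.lt_def.2 ⟨fun j => (hy j).le, i, hy i⟩) ?_, lt_add_of_pos_right r hε⟩
  calc (r + ε) • P *ᵥ x = r • P *ᵥ x + ε • P *ᵥ x := add_smul _ _ _
    _ ≤ r • P *ᵥ x + P *ᵥ (A *ᵥ x - r • x) := by gcongr
    _ = P *ᵥ (A *ᵥ x) := by rw [Matrix.mulVec_sub, Matrix.mulVec_smul, add_sub_cancel]
    _ = A *ᵥ (P *ᵥ x) := by rw [Matrix.mulVec_mulVec, Matrix.mulVec_mulVec, hcomm.eq]

theorem exists_pos_eigenvector_of_isIrreducible [Nonempty n] (hA : A.IsIrreducible) :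
    ∃ (r : ℝ) (x : n → ℝ), (∀ i, 0 < x i) ∧ A *ᵥ x = r • x := by
  obtain ⟨r, ⟨hr, x, hx, hle⟩, hmax⟩ := exists_isGreatest_collatzWielandtSet hA.nonneg
  have heigen : A *ᵥ x = r • x := by
    by_contra hne
    obtain ⟨s, hs, hrs⟩ := exists_gt_mem_collatzWielandtSet hA hr hx.1 hle hne
    exact (hmax hs).not_gt hrs
  have hx0 : x ≠ 0 := by
    rintro rfl
    simpa using hx.2
  exact ⟨r, x, eigenvector_apply_pos_of_isIrreducible hA hx.1 hx0 heigen, heigen⟩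

end CollatzWielandt

section SpectralRadius

theorem tendsto_const_mul_pow_rpow_one_div {c r : ℝ} (hc : 0 < c) (hr : 0 ≤ r) :
    Tendsto (fun k : ℕ => (c * r ^ k) ^ ((1 : ℝ) / (k : ℝ))) atTop (𝓝 r) := by
  have hlim : Tendsto (fun k : ℕ => c ^ ((1 : ℝ) / (k : ℝ)) * r) atTop (𝓝 (c ^ (0 : ℝ) * r)) :=
    (tendsto_const_nhds.rpow tendsto_one_div_atTop_nhds_zero_nat (Or.inl hc.ne')).mul_const r
  rw [Real.rpow_zero, one_mul] at hlim
  refine hlim.congr' ?_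
  filter_upwards [eventually_ne_atTop 0] with k hk
  rw [Real.mul_rpow hc.le (pow_nonneg hr k), one_div, Real.pow_rpow_inv_natCast hr hk]

variable {n : Type*} [Fintype n]

/-- The entrywise `ℓ¹` norm of a matrix, in terms of which `specRad` is defined. -/
def entrywiseL1 (M : Matrix n n ℝ) : ℝ := ∑ i, ∑ j, |M i j|

theorem entrywiseL1_nonneg (M : Matrix n n ℝ) : 0 ≤ entrywiseL1 M :=
  sum_nonneg fun _ _ => sum_nonneg fun _ _ => abs_nonneg _

theorem sum_abs_row_le_entrywiseL1 (M : Matrix n n ℝ) (i : n) :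
    ∑ j, |M i j| ≤ entrywiseL1 M :=
  single_le_sum (f := fun i => ∑ j, |M i j|) (fun _ _ => sum_nonneg fun _ _ => abs_nonneg _)
    (mem_univ i)

theorem abs_apply_le_entrywiseL1 (M : Matrix n n ℝ) (i j : n) : |M i j| ≤ entrywiseL1 M :=
  (single_le_sum (f := fun j => |M i j|) (fun _ _ => abs_nonneg _) (mem_univ j)).trans
    (sum_abs_row_le_entrywiseL1 M i)

theorem entrywiseL1_mul_le (M N : Matrix n n ℝ) :
    entrywiseL1 (M * N) ≤ entrywiseL1 M * entrywiseL1 N := by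
  calc entrywiseL1 (M * N) ≤ ∑ i, ∑ j, ∑ l, |M i l| * |N l j| := by
        refine sum_le_sum fun i _ => sum_le_sum fun j _ => ?_
        rw [Matrix.mul_apply]
        simpa only [abs_mul] using abs_sum_le_sum_abs (fun l => M i l * N l j) univ
    _ = ∑ i, ∑ l, |M i l| * ∑ j, |N l j| := by
        simp only [mul_sum]
        exact sum_congr rfl fun i _ => sum_comm
    _ ≤ ∑ i, ∑ l, |M i l| * entrywiseL1 N := by
        gcongr with i _ l _
        exact sum_abs_row_le_entrywiseL1 N l
    _ = entrywiseL1 M * entrywiseL1 N := by simp only [entrywiseL1, sum_mul]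

theorem sum_mulVec_mem_Icc {M : Matrix n n ℝ} (hM : ∀ i j, 0 ≤ M i j) {x : n → ℝ}
    {a b : ℝ} (ha : ∀ i, a ≤ x i) (hb : ∀ i, x i ≤ b) :
    ∑ i, (M *ᵥ x) i ∈ Set.Icc (a * entrywiseL1 M) (b * entrywiseL1 M) := by
  simp only [entrywiseL1, abs_of_nonneg (hM _ _), mul_sum, mul_comm _ (M _ _)]
  exact ⟨sum_le_sum fun i _ => sum_le_sum fun j _ => mul_le_mul_of_nonneg_left (ha j) (hM i j),
    sum_le_sum fun i _ => sum_le_sum fun j _ => mul_le_mul_of_nonneg_left (hb j) (hM i j)⟩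

variable [DecidableEq n]

theorem entrywiseL1_pow_le (M : Matrix n n ℝ) {k : ℕ} (hk : 1 ≤ k) :
    entrywiseL1 (M ^ k) ≤ entrywiseL1 M ^ k := by
  induction k, hk using Nat.le_induction with
  | base => simp only [pow_one, le_refl]
  | succ k _ ih =>
    rw [pow_succ, pow_succ]
    exact (entrywiseL1_mul_le _ _).trans (mul_le_mul_of_nonneg_right ih (entrywiseL1_nonneg M))

theorem specRad_eq_zero_of_isEmpty [IsEmpty n] (M : Matrix n n ℝ) : specRad M = 0 := by
  refine Tendsto.limsup_eq (tendsto_const_nhds.congr' ?_)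
  filter_upwards [eventually_ne_atTop 0] with k hk
  rw [univ_eq_empty, sum_empty, Real.zero_rpow (one_div_ne_zero (Nat.cast_ne_zero.2 hk))]

/- Boundedness of the roots is what makes the real-valued `limsup` in `specRad` meaningful. -/
theorem eventually_entrywiseL1_pow_le {M : Matrix n n ℝ} {r : ℝ} (h : specRad M < r) :
    ∀ᶠ k : ℕ in atTop, entrywiseL1 (M ^ k) ≤ r ^ k := by
  have hbdd : IsBoundedUnder (· ≤ ·) atTop
      fun k : ℕ => entrywiseL1 (M ^ k) ^ ((1 : ℝ) / (k : ℝ)) := by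
    refine isBoundedUnder_of_eventually_le (a := entrywiseL1 M) ?_
    filter_upwards [eventually_ge_atTop 1] with k hk
    calc entrywiseL1 (M ^ k) ^ ((1 : ℝ) / k) ≤ (entrywiseL1 M ^ k) ^ ((1 : ℝ) / k) :=
          Real.rpow_le_rpow (entrywiseL1_nonneg _) (entrywiseL1_pow_le M hk) (by positivity)
      _ = entrywiseL1 M := by
          rw [one_div, Real.pow_rpow_inv_natCast (entrywiseL1_nonneg M) (by lia)]
  filter_upwards [eventually_lt_of_limsup_lt h hbdd, eventually_ne_atTop 0] with k hlt hk
  calc entrywiseL1 (M ^ k) = (entrywiseL1 (M ^ k) ^ ((1 : ℝ) / k)) ^ k := by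
        rw [one_div, Real.rpow_inv_natCast_pow (entrywiseL1_nonneg _) hk]
    _ ≤ r ^ k := pow_le_pow_left₀ (Real.rpow_nonneg (entrywiseL1_nonneg _) _) hlt.le k

theorem summable_pow_of_specRad_lt_one {M : Matrix n n ℝ} (h : specRad M < 1) :
    Summable fun k : ℕ => M ^ k := by
  obtain ⟨r, hr, hr1⟩ := exists_between (max_lt h one_pos)
  have hle := eventually_entrywiseL1_pow_le ((le_max_left _ _).trans_lt hr)
  refine Pi.summable.2 fun i => Pi.summable.2 fun j => ?_
  refine (summable_geometric_of_lt_one ((le_max_right _ _).trans hr.le) hr1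
    ).of_norm_bounded_eventually_nat ?_
  filter_upwards [hle] with k hk
  exact (abs_apply_le_entrywiseL1 (M ^ k) i j).trans hk

theorem eq_zero_of_mulVec_eq_self_of_specRad_lt_one {M : Matrix n n ℝ} (h : specRad M < 1)
    {u : n → ℝ} (hu : M *ᵥ u = u) : u = 0 := by
  have hinv := (summable_pow_of_specRad_lt_one h).tsum_pow_mul_one_sub
  rw [← Matrix.one_mulVec u, ← hinv, ← Matrix.mulVec_mulVec, Matrix.sub_mulVec,
    Matrix.one_mulVec, hu, sub_self, Matrix.mulVec_zero]

theorem exists_nonneg_eq_add_mulVec_of_specRad_lt_one {M : Matrix n n ℝ} (hM : ∀ i j, 0 ≤ M i j)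
    (h : specRad M < 1) {b : n → ℝ} (hb : 0 ≤ b) : ∃ y : n → ℝ, 0 ≤ y ∧ y = b + M *ᵥ y := by
  have hsum := summable_pow_of_specRad_lt_one h
  have hnonneg (i j : n) : 0 ≤ (∑' k : ℕ, M ^ k) i j :=
    (Pi.hasSum.1 (Pi.hasSum.1 hsum.hasSum i) j).nonneg fun k => Matrix.pow_apply_nonneg hM k i j
  refine ⟨(∑' k : ℕ, M ^ k) *ᵥ b, mulVec_nonneg_of_nonneg hnonneg hb, ?_⟩
  rw [← sub_eq_iff_eq_add]
  nth_rw 1 [← Matrix.one_mulVec ((∑' k : ℕ, M ^ k) *ᵥ b)]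
  rw [← Matrix.sub_mulVec, Matrix.mulVec_mulVec, hsum.one_sub_mul_tsum_pow, Matrix.one_mulVec]

theorem specRad_eq_of_pos_eigenvector [Nonempty n] {A : Matrix n n ℝ} (hA : ∀ i j, 0 ≤ A i j)
    {r : ℝ} {x : n → ℝ} (hx : ∀ i, 0 < x i) (h : A *ᵥ x = r • x) : specRad A = r := by
  obtain ⟨a, ha⟩ := Finite.exists_min x
  obtain ⟨b, hb⟩ := Finite.exists_max x
  have hr : 0 ≤ r := by
    have hAx : 0 ≤ (r • x) a := h ▸ mulVec_nonneg_of_nonneg hA (fun i => (hx i).le) a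
    exact nonneg_of_mul_nonneg_left hAx (hx a)
  have hsum : 0 < ∑ i, x i := sum_pos (fun i _ => hx i) univ_nonempty
  have hbounds (k : ℕ) : x a * entrywiseL1 (A ^ k) ≤ r ^ k * ∑ i, x i ∧
      r ^ k * ∑ i, x i ≤ x b * entrywiseL1 (A ^ k) := by
    have hmem := sum_mulVec_mem_Icc (Matrix.pow_apply_nonneg hA k) ha hb
    simpa only [pow_mulVec_eq_pow_smul h, Pi.smul_apply, smul_eq_mul, ← mul_sum,
      Set.mem_Icc] using hmem
  refine Tendsto.limsup_eq (tendsto_of_tendsto_of_tendsto_of_le_of_le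
    (tendsto_const_mul_pow_rpow_one_div (div_pos hsum (hx b)) hr)
    (tendsto_const_mul_pow_rpow_one_div (div_pos hsum (hx a)) hr) (fun k => ?_) fun k => ?_)
  · refine Real.rpow_le_rpow (mul_nonneg (div_pos hsum (hx b)).le (pow_nonneg hr k)) ?_
      (by positivity)
    rw [div_mul_eq_mul_div, div_le_iff₀' (hx b), mul_comm]
    exact (hbounds k).2
  · refine Real.rpow_le_rpow (entrywiseL1_nonneg _) ?_ (by positivity)
    rw [div_mul_eq_mul_div, le_div_iff₀' (hx a), mul_comm (∑ i, x i)]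
    exact (hbounds k).1

theorem exists_pos_mulVec_eq_specRad_smul [Nonempty n] {A : Matrix n n ℝ}
    (hA : A.IsIrreducible) : ∃ x : n → ℝ, (∀ i, 0 < x i) ∧ A *ᵥ x = specRad A • x := by
  obtain ⟨r, x, hx, h⟩ := exists_pos_eigenvector_of_isIrreducible hA
  exact ⟨x, hx, specRad_eq_of_pos_eigenvector hA.nonneg hx h ▸ h⟩

end SpectralRadius

section PrincipalSubmatrix

/-- The principal submatrix `B^S = (B_{vw})_{v,w ∈ S}`, with rows and columns indexed by the
subtype of `S`. -/
abbrev principalSubmatrix {α : Type*} (B : Matrix V V α) (S : Set V) : Matrix S S α :=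
  B.submatrix Subtype.val Subtype.val

/-- The restriction of `ψ` to `S` is harmonic for the principal submatrix `B^S`. The sum is written
over all of `V`, with the terms outside `S` cut off, to match `IsPhiC`. -/
def IsHarmonicOn (B : Matrix V V ℝ) (S : Set V) (ψ : V → ℝ) : Prop :=
  ∀ v ∈ S, ∑ w, S.indicator (fun w => B v w * ψ w) w = ψ v

variable {B : Matrix V V ℝ} {S : Set V} {ψ : V → ℝ}

theorem specRadOn_eq_specRad_principalSubmatrix (B : Matrix V V ℝ) (S : Set V) [Fintype S]
    [DecidableEq S] : specRadOn B S = specRad (principalSubmatrix B S) := by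
  unfold specRadOn
  rw [Subsingleton.elim (Set.toFinite S).fintype ‹Fintype S›,
    Subsingleton.elim (Classical.decEq S) ‹DecidableEq S›]
  rfl

theorem specRadOn_empty (B : Matrix V V ℝ) : specRadOn B ∅ = 0 := by
  classical
  rw [specRadOn_eq_specRad_principalSubmatrix, specRad_eq_zero_of_isEmpty]

theorem sum_indicator_eq_sum_coe {M : Type*} [AddCommMonoid M] (S : Set V) [Fintype S]
    (f : V → M) : ∑ w, S.indicator f w = ∑ w : S, f w :=
  (Fintype.sum_of_injective ((↑) : S → V) Subtype.val_injective _ _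
    (fun w hw => Set.indicator_of_notMem (by simpa using hw) f)
    fun w => (Set.indicator_of_mem w.2 f).symm).symm

theorem isHarmonicOn_iff_mulVec_eq_self [Fintype S] :
    IsHarmonicOn B S ψ ↔ principalSubmatrix B S *ᵥ (fun i : S => ψ i) = fun i : S => ψ i := by
  simp only [IsHarmonicOn, sum_indicator_eq_sum_coe, funext_iff, Subtype.forall]
  rfl

theorem IsHarmonicOn.congr {φ : V → ℝ} (hψ : IsHarmonicOn B S ψ) (h : Set.EqOn ψ φ S) :
    IsHarmonicOn B S φ := fun v hv => by
  have hcongr : S.indicator (fun w => B v w * ψ w) = S.indicator fun w => B v w * φ w :=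
    Set.indicator_congr fun w hw => by rw [h hw]
  rw [← hcongr, hψ v hv, h hv]

theorem isHarmonicOn_iff_mulVec_eq (h : ∀ v ∈ S, ∀ w ∉ S, B v w * ψ w = 0) :
    IsHarmonicOn B S ψ ↔ ∀ v ∈ S, (B *ᵥ ψ) v = ψ v := by
  refine forall₂_congr fun v hv => ?_
  rw [Set.indicator_eq_self.2 fun w hw => by_contra fun hwS => hw (h v hv w hwS)]
  rfl

theorem IsHarmonicOn.eq_zero_of_specRadOn_lt_one (hψ : IsHarmonicOn B S ψ)
    (hS : specRadOn B S < 1) {v : V} (hv : v ∈ S) : ψ v = 0 := by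
  classical
  rw [specRadOn_eq_specRad_principalSubmatrix] at hS
  have hzero := eq_zero_of_mulVec_eq_self_of_specRad_lt_one hS
    (isHarmonicOn_iff_mulVec_eq_self.1 hψ)
  exact congrFun hzero ⟨v, hv⟩

theorem eq_zero_of_forall_mulVec_eq_of_specRadOn_lt_one (hS : specRadOn B S < 1)
    (hψ : ∀ v ∈ S, (B *ᵥ ψ) v = ψ v) (hψ0 : ∀ v ∉ S, ψ v = 0) : ψ = 0 := by
  have hharm := (isHarmonicOn_iff_mulVec_eq fun v _ w hw => by rw [hψ0 w hw, mul_zero]).2 hψ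
  ext v
  by_cases hv : v ∈ S
  exacts [hharm.eq_zero_of_specRadOn_lt_one hS hv, hψ0 v hv]

theorem mulVec_extend_apply {R : Type*} [NonUnitalNonAssocSemiring R] [Fintype S]
    (B : Matrix V V R) (y : S → R) (v : V) :
    (B *ᵥ Function.extend Subtype.val y 0) v = ∑ w : S, B v w * y w :=
  (Fintype.sum_of_injective ((↑) : S → V) Subtype.val_injective _ _
    (fun w hw => by rw [Function.extend_apply' _ _ _ hw, Pi.zero_apply, mul_zero])
    fun w => by rw [Subtype.val_injective.extend_apply]).symm

/- The Dirichlet problem on `S` with boundary values `f`: the Neumann series of `B^S` is applied to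
the contribution of `f` from outside `S`. -/
theorem exists_nonneg_mulVec_eq_of_specRadOn_lt_one (hB : ∀ v w, 0 ≤ B v w)
    (hS : specRadOn B S < 1) {f : V → ℝ} (hf : 0 ≤ f) :
    ∃ ψ : V → ℝ, 0 ≤ ψ ∧ (∀ v ∉ S, ψ v = f v) ∧ ∀ v ∈ S, (B *ᵥ ψ) v = ψ v := by
  classical
  rw [specRadOn_eq_specRad_principalSubmatrix] at hS
  set g : V → ℝ := Sᶜ.indicator f
  have hg : 0 ≤ g := Set.indicator_nonneg fun v _ => hf v
  obtain ⟨y, hy, hyeq⟩ := exists_nonneg_eq_add_mulVec_of_specRad_lt_one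
    (M := principalSubmatrix B S) (fun i j => hB i j) hS (b := fun i : S => (B *ᵥ g) i)
    fun i => mulVec_nonneg_of_nonneg hB hg i
  have hψS (i : S) : (g + Function.extend Subtype.val y 0) i = y i := by
    have hgi : g i = 0 := Set.indicator_of_notMem (not_not.2 i.2) f
    rw [Pi.add_apply, Subtype.val_injective.extend_apply, hgi, zero_add]
  refine ⟨g + Function.extend Subtype.val y 0, add_nonneg hg ?_, fun v hv => ?_, fun v hv => ?_⟩
  · exact Function.extend_nonneg hy le_rfl
  · rw [Pi.add_apply, Function.extend_apply' _ _ _ (by simpa using hv), Pi.zero_apply, add_zero]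
    exact Set.indicator_of_mem hv f
  · rw [Matrix.mulVec_add, Pi.add_apply, mulVec_extend_apply, hψS ⟨v, hv⟩]
    exact (congrFun hyeq ⟨v, hv⟩).symm

end PrincipalSubmatrix

section Reachability

variable [DecidableEq V] {B : Matrix V V ℝ} {u v w : V} {S C : Set V}

theorem Reaches.refl (B : Matrix V V ℝ) (v : V) : Reaches B v v :=
  ⟨0, by simp⟩

theorem reaches_of_apply_ne_zero (hB : ∀ v w, 0 ≤ B v w) (h : B v w ≠ 0) : Reaches B v w :=
  ⟨1, by simpa using (hB v w).lt_of_ne' h⟩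

theorem Reaches.trans (hB : ∀ v w, 0 ≤ B v w) (huv : Reaches B u v) (hvw : Reaches B v w) :
    Reaches B u w := by
  obtain ⟨k, hk⟩ := huv
  obtain ⟨l, hl⟩ := hvw
  refine ⟨k + l, ?_⟩
  rw [pow_add]
  exact mulVec_apply_pos (Matrix.pow_apply_nonneg hB k)
    (fun u => Matrix.pow_apply_nonneg hB l u w) hk hl

theorem subset_closureSet (B : Matrix V V ℝ) (S : Set V) : S ⊆ closureSet B S :=
  fun v hv => ⟨v, hv, .refl B v⟩

theorem mem_closureSet_of_apply_ne_zero (hB : ∀ v w, 0 ≤ B v w) (hw : w ∈ closureSet B S)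
    (h : B v w ≠ 0) : v ∈ closureSet B S := by
  obtain ⟨u, hu, hwu⟩ := hw
  exact ⟨u, hu, (reaches_of_apply_ne_zero hB h).trans hB hwu⟩

theorem IsHarmonic.apply_pos_of_mem_closureSet (hB : ∀ v w, 0 ≤ B v w) {ψ : V → ℝ} (hψ : 0 ≤ ψ)
    (hharm : IsHarmonic B ψ) (hS : ∀ v ∈ S, 0 < ψ v) (hv : v ∈ closureSet B S) : 0 < ψ v := by
  obtain ⟨w, hw, k, hk⟩ := hv
  exact eigenvector_apply_pos hB hψ (r := 1) ((funext hharm).trans (one_smul ℝ ψ).symm) hk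
    (hS w hw)

theorem principalSubmatrix_pow [Fintype S] [DecidableEq S] (hB : ∀ v w, 0 ≤ B v w)
    (hS : ∀ v ∈ S, ∀ w ∈ S, ∀ u, Reaches B v u → Reaches B u w → u ∈ S) (k : ℕ) :
    principalSubmatrix B S ^ k = principalSubmatrix (B ^ k) S := by
  induction k with
  | zero => exact (Matrix.submatrix_one _ Subtype.val_injective).symm
  | succ k ih =>
    ext v w
    rw [pow_succ', ih]
    change ∑ u : S, B v u * (B ^ k) u w = (B ^ (k + 1)) v w
    rw [pow_succ', Matrix.mul_apply]
    refine Fintype.sum_of_injective _ Subtype.val_injective _ _ (fun u hu => ?_) fun u => rfl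
    by_contra hne
    have hvu := reaches_of_apply_ne_zero hB (left_ne_zero_of_mul hne)
    have huw : Reaches B u w :=
      ⟨k, (Matrix.pow_apply_nonneg hB k u w).lt_of_ne' (right_ne_zero_of_mul hne)⟩
    exact hu ⟨⟨u, hS v v.2 w w.2 u hvu huw⟩, rfl⟩

theorem IsComponent.nonempty (hC : IsComponent B C) : C.Nonempty :=
  let ⟨v, hv, _⟩ := hC.2
  ⟨v, hv⟩

theorem IsComponent.reaches (hB : ∀ v w, 0 ≤ B v w) (hC : IsComponent B C) (hv : v ∈ C)
    (hw : w ∈ C) : Reaches B v w := by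
  obtain ⟨⟨u, rfl⟩, -⟩ := hC
  exact hv.2.trans hB hw.1

theorem IsComponent.mem_of_reaches_of_reaches (hB : ∀ v w, 0 ≤ B v w) (hC : IsComponent B C)
    (hv : v ∈ C) (hw : w ∈ C) (hvu : Reaches B v u) (huw : Reaches B u w) : u ∈ C := by
  obtain ⟨⟨v₀, rfl⟩, -⟩ := hC
  exact ⟨hv.1.trans hB hvu, huw.trans hB hw.2⟩

theorem IsComponent.apply_eq_zero (hB : ∀ v w, 0 ≤ B v w) (hC : IsComponent B C) (hv : v ∈ C)
    (hw : w ∈ closureSet B C) (hwC : w ∉ C) : B v w = 0 := by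
  obtain ⟨u, hu, hwu⟩ := hw
  by_contra hne
  exact hwC (hC.mem_of_reaches_of_reaches hB hv hu (reaches_of_apply_ne_zero hB hne) hwu)

theorem IsComponent.exists_pow_pos (hB : ∀ v w, 0 ≤ B v w) (hC : IsComponent B C) (hv : v ∈ C)
    (hw : w ∈ C) : ∃ k > 0, 0 < (B ^ k) v w := by
  obtain ⟨a, ha, b, hb, hab⟩ := hC.2
  obtain ⟨k, hk⟩ := hC.reaches hB hv ha
  obtain ⟨l, hl⟩ := hC.reaches hB hb hw
  have hpow (m : ℕ) := Matrix.pow_apply_nonneg hB m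
  have hstep : 0 < (B ^ (l + 1)) a w := by
    rw [pow_succ']
    exact mulVec_apply_pos hB (fun u => hpow l u w) ((hB a b).lt_of_ne' hab) hl
  refine ⟨k + (l + 1), by lia, ?_⟩
  rw [pow_add]
  exact mulVec_apply_pos (hpow k) (fun u => hpow (l + 1) u w) hk hstep

theorem IsComponent.isIrreducible_principalSubmatrix (hB : ∀ v w, 0 ≤ B v w)
    (hC : IsComponent B C) : (principalSubmatrix B C).IsIrreducible := by
  classical
  refine (Matrix.isIrreducible_iff_exists_pow_pos (A := principalSubmatrix B C)
    fun _ _ => hB _ _).2 fun v w => ?_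
  obtain ⟨k, hk, hpos⟩ := hC.exists_pow_pos hB v.2 w.2
  refine ⟨k, hk, ?_⟩
  rwa [principalSubmatrix_pow hB fun v hv w hw u => hC.mem_of_reaches_of_reaches hB hv hw]

end Reachability

section HarmonicComponent

variable [DecidableEq V] {B : Matrix V V ℝ} {C : Set V} {ψ φ φ' : V → ℝ}

theorem IsHarmonicComponent.specRadOn_closureSet_diff_lt_one (hC : IsHarmonicComponent B C) :
    specRadOn B (closureSet B C \ C) < 1 := by
  rcases Set.eq_empty_or_nonempty (closureSet B C \ C) with hempty | hne
  · rw [hempty, specRadOn_empty]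
    exact one_pos
  · exact hC.2.2 hne

theorem IsHarmonicComponent.exists_pos_isHarmonicOn (hB : ∀ v w, 0 ≤ B v w)
    (hC : IsHarmonicComponent B C) :
    ∃ x : V → ℝ, (∀ v ∈ C, 0 < x v) ∧ (∀ v ∉ C, x v = 0) ∧ IsHarmonicOn B C x := by
  classical
  have := hC.1.nonempty.to_subtype
  obtain ⟨x, hx, heigen⟩ :=
    exists_pos_mulVec_eq_specRad_smul (hC.1.isIrreducible_principalSubmatrix hB)
  rw [← specRadOn_eq_specRad_principalSubmatrix, hC.2.1, one_smul] at heigen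
  have hextend (i : C) : Function.extend Subtype.val x 0 (i : V) = x i :=
    Subtype.val_injective.extend_apply x 0 i
  refine ⟨Function.extend Subtype.val x 0, fun v hv => ?_, fun v hv => ?_, ?_⟩
  · exact (hextend ⟨v, hv⟩).symm ▸ hx ⟨v, hv⟩
  · exact Function.extend_apply' _ _ _ (by simpa using hv)
  · rw [isHarmonicOn_iff_mulVec_eq_self]
    simpa only [hextend] using heigen

theorem IsComponent.exists_eq_mul_of_isHarmonicOn (hB : ∀ v w, 0 ≤ B v w) (hC : IsComponent B C)
    (hφpos : ∀ v ∈ C, 0 < φ v) (hφ : IsHarmonicOn B C φ) (hφ' : IsHarmonicOn B C φ') :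
    ∃ t : ℝ, ∀ v ∈ C, φ' v = t * φ v := by
  classical
  obtain ⟨t, ht⟩ := eigenvector_eq_smul_of_isIrreducible
    (hC.isIrreducible_principalSubmatrix hB) (r := 1) (x := fun i : C => φ i)
    (y := fun i : C => φ' i) (fun i => hφpos i i.2)
    (by rw [one_smul]; exact isHarmonicOn_iff_mulVec_eq_self.1 hφ)
    (by rw [one_smul]; exact isHarmonicOn_iff_mulVec_eq_self.1 hφ')
  exact ⟨t, fun v hv => congrFun ht ⟨v, hv⟩⟩

theorem IsComponent.isHarmonic_of_isHarmonicOn (hB : ∀ v w, 0 ≤ B v w) (hC : IsComponent B C)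
    (hψC : IsHarmonicOn B C ψ) (hψD : ∀ v ∈ closureSet B C \ C, (B *ᵥ ψ) v = ψ v)
    (hψ0 : ∀ v ∉ closureSet B C, ψ v = 0) : IsHarmonic B ψ := by
  intro v
  by_cases hv : v ∈ closureSet B C
  · by_cases hvC : v ∈ C
    · refine (isHarmonicOn_iff_mulVec_eq fun v hv w hw => ?_).1 hψC v hvC
      by_cases hwcl : w ∈ closureSet B C
      · rw [hC.apply_eq_zero hB hv hwcl hw, zero_mul]
      · rw [hψ0 w hwcl, mul_zero]
    · exact hψD v ⟨hv, hvC⟩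
  · rw [hψ0 v hv]
    refine sum_eq_zero fun w _ => ?_
    by_contra hne
    have hw : w ∈ closureSet B C := by_contra fun h => right_ne_zero_of_mul hne (hψ0 w h)
    exact hv (mem_closureSet_of_apply_ne_zero hB hw (left_ne_zero_of_mul hne))

theorem IsHarmonicComponent.exists_isHarmonic (hB : ∀ v w, 0 ≤ B v w)
    (hC : IsHarmonicComponent B C) :
    ∃ ψ : V → ℝ, 0 ≤ ψ ∧ (∀ v ∈ C, 0 < ψ v) ∧ (∀ v ∉ closureSet B C, ψ v = 0) ∧
      IsHarmonicOn B C ψ ∧ IsHarmonic B ψ := by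
  obtain ⟨x, hxpos, hx0, hxharm⟩ := hC.exists_pos_isHarmonicOn hB
  have hx : 0 ≤ x := fun v => by
    by_cases hv : v ∈ C
    exacts [(hxpos v hv).le, (hx0 v hv).ge]
  obtain ⟨ψ, hψ, hψx, hψD⟩ :=
    exists_nonneg_mulVec_eq_of_specRadOn_lt_one hB hC.specRadOn_closureSet_diff_lt_one hx
  have hψC (v) (hv : v ∈ C) : ψ v = x v := hψx v fun h => h.2 hv
  have hψ0 (v) (hv : v ∉ closureSet B C) : ψ v = 0 :=
    (hψx v fun h => hv h.1).trans (hx0 v fun h => hv (subset_closureSet B C h))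
  have hψharm : IsHarmonicOn B C ψ := hxharm.congr fun v hv => (hψC v hv).symm
  exact ⟨ψ, hψ, fun v hv => (hψC v hv).symm ▸ hxpos v hv, hψ0, hψharm,
    hC.1.isHarmonic_of_isHarmonicOn hB hψharm hψD hψ0⟩

theorem isPhiC_inv_sum_smul (hB : ∀ v w, 0 ≤ B v w) (hC : C.Nonempty) (hψ : 0 ≤ ψ)
    (hpos : ∀ v ∈ C, 0 < ψ v) (hψ0 : ∀ v ∉ closureSet B C, ψ v = 0)
    (hψC : IsHarmonicOn B C ψ) (hharm : IsHarmonic B ψ) :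
    IsPhiC B C ((∑ v, ψ v)⁻¹ • ψ) := by
  obtain ⟨v₀, hv₀⟩ := hC
  have hsum : 0 < ∑ v, ψ v := sum_pos' (fun v _ => hψ v) ⟨v₀, mem_univ v₀, hpos v₀ hv₀⟩
  refine ⟨fun v => mul_nonneg (inv_nonneg.2 hsum.le) (hψ v), ?_, fun v => ?_, fun v hv => ?_,
    fun v => ⟨fun hne => ?_, fun hv => ?_⟩⟩
  · simp only [Pi.smul_apply, smul_eq_mul, ← mul_sum, inv_mul_cancel₀ hsum.ne']
  · simp only [Pi.smul_apply, smul_eq_mul, mul_left_comm (B v _), ← mul_sum, hharm v]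
  · simp only [Pi.smul_apply, smul_eq_mul, mul_left_comm (B v _), Set.indicator_const_mul,
      ← mul_sum, hψC v hv]
  · by_contra hv
    exact right_ne_zero_of_mul hne (hψ0 v hv)
  · exact mul_ne_zero (inv_ne_zero hsum.ne') (hharm.apply_pos_of_mem_closureSet hB hψ hpos hv).ne'

theorem IsPhiC.eq (hB : ∀ v w, 0 ≤ B v w) (hC : IsHarmonicComponent B C) (hφ : IsPhiC B C φ)
    (hφ' : IsPhiC B C φ') : φ = φ' := by
  obtain ⟨hnonneg, hsum, hharm, hharmC, hsupp⟩ := hφ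
  obtain ⟨-, hsum', hharm', hharmC', hsupp'⟩ := hφ'
  have hpos (v) (hv : v ∈ C) : 0 < φ v :=
    (hnonneg v).lt_of_ne' ((hsupp v).2 (subset_closureSet B C hv))
  obtain ⟨t, ht⟩ := hC.1.exists_eq_mul_of_isHarmonicOn hB hpos hharmC hharmC'
  have heq : φ' = t • φ := by
    refine sub_eq_zero.1 (eq_zero_of_forall_mulVec_eq_of_specRadOn_lt_one
      hC.specRadOn_closureSet_diff_lt_one (fun v _ => ?_) fun v hv => ?_)
    · rw [Matrix.mulVec_sub, Matrix.mulVec_smul, show B *ᵥ φ = φ from funext hharm,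
        show B *ᵥ φ' = φ' from funext hharm']
    · by_cases hvC : v ∈ C
      · exact sub_eq_zero.2 (ht v hvC)
      · have hvcl : v ∉ closureSet B C := fun h => hv ⟨h, hvC⟩
        simp [not_not.1 (mt (hsupp v).1 hvcl), not_not.1 (mt (hsupp' v).1 hvcl)]
  have ht1 : t = 1 := by
    simpa only [heq, Pi.smul_apply, smul_eq_mul, ← mul_sum, hsum, mul_one] using hsum'
  rw [heq, ht1, one_smul]

end HarmonicComponent

end

/-- For a `B`-harmonic component `C` there is a unique normalized `B`-harmonic vector `φ`
with `Σ_{w ∈ C} B_{vw} φ_w = φ_v` for all `v ∈ C` and with support exactly the closure of `C`. -/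
theorem harmonicComponent_phi {V : Type*} [Fintype V] [Nonempty V] [DecidableEq V]
    (B : Matrix V V ℝ) (hB : ∀ v w, 0 ≤ B v w)
    (C : Set V) (hC : IsHarmonicComponent B C) :
    ∃! φ : V → ℝ, IsPhiC B C φ := by
  obtain ⟨ψ, hψ, hpos, hψ0, hψC, hharm⟩ := hC.exists_isHarmonic hB
  have hφ := isPhiC_inv_sum_smul hB hC.1.nonempty hψ hpos hψ0 hψC hharm
  exact ⟨_, hφ, fun φ' hφ' => hφ'.eq hB hC hφ⟩
end
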